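/- Let f ∈ ℂ[x,y,z,w] be a reduced homogeneous polynomial of degree d defining a surface D: f = 0 in P³, tame with respect to the pair ρ1, ρ2 of degrees e1 ≤ e2, set e3 = d − 1 − e1 − e2, assume e3 ≥ e2 and that D is NOT free. Assume moreover the singular locus Σ of D is 1-dimensional, i.e., m(f)_k = a·k + b for all sufficiently large k, with deg Σ = a. Set s1 = e1 + e2 + e3 and s2 = e1e2 + e1e3 + e2e3. Then: (i) deg Σ ≤ s1² − s2 − 1; (ii) if D is nearly free with exponents e1, e2, e3+1, then deg Σ = s1² − s2 − 1; (iii) conversely, if deg Σ = s1² − s2 − 1 and AR(f) is generated as an S-module by ρ1, ρ2 and two further homogeneous syzygies ρ3, ρ4, then D is nearly free with exponents e1, e2, e3+1. -/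

import Mathlib

open MvPolynomial Matrix

noncomputable section

/-- The polynomial ring `S = ℂ[x,y,z,w]`. -/
abbrev S4 : Type := MvPolynomial (Fin 4) ℂ

/-- The `S`-linear map sending `ρ = (α,β,γ,δ)` to `α fₓ + β f_y + γ f_z + δ f_w`. -/
def jacPair (f : S4) : (Fin 4 → S4) →ₗ[S4] S4 where
  toFun ρ := ∑ i, ρ i * pderiv i f
  map_add' a b := by simp [add_mul, Finset.sum_add_distrib]
  map_smul' c a := by simp [Finset.mul_sum, mul_assoc]

/-- `AR(f)`: the `S`-module of all Jacobian syzygies of `f`. -/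
def AR4 (f : S4) : Submodule S4 (Fin 4 → S4) := LinearMap.ker (jacPair f)

/-- A vector of polynomials is homogeneous of degree `q` if each component is. -/
def VecHomog (ρ : Fin 4 → S4) (q : ℕ) : Prop := ∀ i, (ρ i).IsHomogeneous q

/-- `AR(f)_k`, the degree-`k` homogeneous part of `AR(f)`, as a `ℂ`-subspace. -/
def ARgr (f : S4) (k : ℕ) : Submodule ℂ (Fin 4 → S4) :=
  (AR4 f).restrictScalars ℂ ⊓ Submodule.pi Set.univ (fun _ => homogeneousSubmodule (Fin 4) ℂ k)

/-- `ar(f)_k = dim_ℂ AR(f)_k`. -/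
def arDim (f : S4) (k : ℕ) : ℕ := Module.finrank ℂ (ARgr f k)

/-- `ar(f)_q` for an integer index, with the convention that it vanishes for `q < 0`. -/
def arZ (f : S4) (q : ℤ) : ℕ := if 0 ≤ q then arDim f q.toNat else 0

/-- The Jacobian ideal of `f`. -/
def JacIdeal (f : S4) : Ideal S4 := Ideal.span (Set.range fun i : Fin 4 => pderiv i f)

/-- `m(f)_k = dim_ℂ M(f)_k`, the dimension of the degree-`k` part of the Milnor algebra. -/
def milnor4 (f : S4) (k : ℕ) : ℕ :=
  Module.finrank ℂ ((homogeneousSubmodule (Fin 4) ℂ k).map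
    (Submodule.mkQ ((JacIdeal f).restrictScalars ℂ)))

/-- `binom(m,3)` with the convention that it is `0` for `m < 3`. -/
def binom3 (m : ℤ) : ℕ := m.toNat.choose 3

/-- All four `3×3` minors of the `3×4` matrix with rows `ρ1, ρ2, ρ` vanish. -/
def MinorsVanish3 (ρ1 ρ2 ρ : Fin 4 → S4) : Prop :=
  ∀ j : Fin 4,
    (Matrix.of fun i k => ![ρ1, ρ2, ρ] i (j.succAbove k) : Matrix (Fin 3) (Fin 3) S4).det = 0

/-- `D : f = 0` is tame with respect to `ρ1, ρ2`: every homogeneous syzygy `ρ` for which all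
`3×3` minors of the matrix with rows `ρ1, ρ2, ρ` vanish lies in `S·ρ1 + S·ρ2`. -/
def TamePair (f : S4) (ρ1 ρ2 : Fin 4 → S4) : Prop :=
  ∀ ρ ∈ AR4 f, ∀ q : ℕ, VecHomog ρ q → MinorsVanish3 ρ1 ρ2 ρ →
    ∃ a b : S4, ρ = a • ρ1 + b • ρ2

/-- `ρ1` is a nonzero homogeneous syzygy of minimal degree `e1`, and `ρ2` is a homogeneous
syzygy of minimal degree `e2 ≥ e1` among the homogeneous syzygies not in `S·ρ1`. -/
def MinimalPair (f : S4) (ρ1 ρ2 : Fin 4 → S4) (e1 e2 : ℕ) : Prop :=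
  ρ1 ∈ AR4 f ∧ ρ1 ≠ 0 ∧ VecHomog ρ1 e1 ∧
  (∀ ρ ∈ AR4 f, ∀ q : ℕ, ρ ≠ 0 → VecHomog ρ q → e1 ≤ q) ∧
  ρ2 ∈ AR4 f ∧ VecHomog ρ2 e2 ∧ e1 ≤ e2 ∧ (∀ a : S4, ρ2 ≠ a • ρ1) ∧
  (∀ ρ ∈ AR4 f, ∀ q : ℕ, VecHomog ρ q → (∀ a : S4, ρ ≠ a • ρ1) → e2 ≤ q)

/-- `D : f = 0` is a free surface with exponents `d1 ≤ d2 ≤ d3`: `AR(f)` is a free graded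
`S`-module with a homogeneous basis of degrees `d1, d2, d3`. -/
def IsFreeWith (f : S4) (d1 d2 d3 : ℕ) : Prop :=
  d1 ≤ d2 ∧ d2 ≤ d3 ∧
  ∃ ρ1 ρ2 ρ3 : Fin 4 → S4,
    ρ1 ∈ AR4 f ∧ ρ2 ∈ AR4 f ∧ ρ3 ∈ AR4 f ∧
    VecHomog ρ1 d1 ∧ VecHomog ρ2 d2 ∧ VecHomog ρ3 d3 ∧
    (∀ ρ ∈ AR4 f, ∃ a b c : S4, ρ = a • ρ1 + b • ρ2 + c • ρ3) ∧
    (∀ a b c : S4, a • ρ1 + b • ρ2 + c • ρ3 = 0 → a = 0 ∧ b = 0 ∧ c = 0)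

/-- `D : f = 0` is a nearly free surface with exponents `d1 ≤ d2 ≤ d3` (`d4 = d3`):
`AR(f)` is generated by four homogeneous syzygies of degrees `d1, d2, d3, d3`,
with `d3 = d - (d1 + d2)`, whose module of relations is generated by a single relation
`a₁ρ₁ + a₂ρ₂ + a₃ρ₃ + a₄ρ₄ = 0` with `a₁, a₂, a₃, a₄` homogeneous of degrees
`d3-d1+1, d3-d2+1, 1, 1`. -/
def IsNearlyFreeWith (f : S4) (d d1 d2 d3 : ℕ) : Prop :=
  d1 ≤ d2 ∧ d2 ≤ d3 ∧ d1 + d2 + d3 = d ∧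
  ∃ (ρ : Fin 4 → Fin 4 → S4) (a : Fin 4 → S4),
    (∀ i, ρ i ∈ AR4 f) ∧
    VecHomog (ρ 0) d1 ∧ VecHomog (ρ 1) d2 ∧ VecHomog (ρ 2) d3 ∧ VecHomog (ρ 3) d3 ∧
    (∀ σ ∈ AR4 f, ∃ b : Fin 4 → S4, σ = ∑ i, b i • ρ i) ∧
    (a 0).IsHomogeneous (d3 - d1 + 1) ∧ (a 1).IsHomogeneous (d3 - d2 + 1) ∧
    (a 2).IsHomogeneous 1 ∧ (a 3).IsHomogeneous 1 ∧
    a ≠ 0 ∧ (∑ i, a i • ρ i) = 0 ∧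
    (∀ b : Fin 4 → S4, (∑ i, b i • ρ i) = 0 → ∃ c : S4, b = c • a)

/-- `D : f = 0` is tame: it is tame with respect to some pair `ρ1, ρ2` chosen as in the paper. -/
def IsTame (f : S4) : Prop :=
  ∃ (ρ1 ρ2 : Fin 4 → S4) (e1 e2 : ℕ), MinimalPair f ρ1 ρ2 e1 e2 ∧ TamePair f ρ1 ρ2

/-- The `4×4` matrix with rows the Euler vector field `(x,y,z,w)` and `ρ1, ρ2, ρ`. -/
def EMat (ρ1 ρ2 ρ : Fin 4 → S4) : Matrix (Fin 4) (Fin 4) S4 :=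
  Matrix.of ![fun i => X i, ρ1, ρ2, ρ]

/-
Let `E` be the Euler field. By Euler's formula and squarefreeness, `f` divides `det(E, ρ1, ρ2, ρ)`
for every syzygy `ρ`, and `ρ ↦ det(E, ρ1, ρ2, ρ) / f` has kernel `S·ρ1 ⊕ S·ρ2` because `D` is tame.
Its image is an ideal `I` of `S`, whence an exact sequence
`0 → S·ρ1 ⊕ S·ρ2 → AR(f) → I(-e3) → 0`, and counting dimensions gives `dim (S/I)_k = m k + c` for
large `k`, where `m = s₁² - s₂ - deg Σ`.

Since `AR(f)` is a second syzygy module, a polynomial multiplied into `I` by three linearly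
independent linear forms already lies in `I`. On the other hand, if `I ≠ S` and `m ≤ 0`, then
`dim (S/P)_k ≤ k` for some `k` and an associated prime `P` of `S/I`; since binary forms split over
`ℂ`, such a `P` contains three independent linear forms. So `m ≥ 1` unless `I = S`, in which case
`D` is free. If `D` is nearly free, comparing dimensions gives `m = 1`. If `m = 1` and `AR(f)` is
generated by `ρ1, ρ2` and two further syzygies, then `I` has two generators, and its Hilbert
function forces them to be independent linear forms; their Koszul relation lifts to the single
relation of a nearly free surface.
-/

section HomogeneousComponents

variable {σ R : Type*} [CommSemiring R]

lemma homogeneousComponent_add_mul {p q : MvPolynomial σ R} {n : ℕ} (hq : q.IsHomogeneous n)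
    (m : ℕ) : homogeneousComponent (m + n) (p * q) = homogeneousComponent m p * q := by
  classical
  have component_summand (i : ℕ) : homogeneousComponent (m + n) (homogeneousComponent i p * q) =
      if i = m then homogeneousComponent m p * q else 0 := by
    rw [homogeneousComponent_of_mem ((homogeneousComponent_isHomogeneous i p).mul hq)]
    by_cases hi : i = m
    · simp [hi]
    · simp [hi, Ne.symm hi]
  conv_lhs => rw [← sum_homogeneousComponent p, Finset.sum_mul, map_sum]
  simp_rw [component_summand, Finset.sum_ite_eq']
  split_ifs with hm
  · rfl
  · rw [homogeneousComponent_eq_zero, zero_mul]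
    simpa [Nat.lt_succ_iff] using hm

lemma isHomogeneous_of_mul_right [IsRightCancelMulZero (MvPolynomial σ R)]
    {p q : MvPolynomial σ R} {m n : ℕ} (hq : q.IsHomogeneous n) (hq0 : q ≠ 0)
    (h : (p * q).IsHomogeneous (m + n)) : p.IsHomogeneous m := by
  have hp := homogeneousComponent_add_mul (p := p) hq m
  rw [homogeneousComponent_eq_self h] at hp
  rw [mul_right_cancel₀ hq0 hp]
  exact homogeneousComponent_isHomogeneous m p

lemma eq_zero_of_mul_isHomogeneous_of_lt [IsDomain R] {p q : MvPolynomial σ R} {k n : ℕ}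
    (hq : q.IsHomogeneous n) (hq0 : q ≠ 0) (h : (p * q).IsHomogeneous k) (hk : k < n) : p = 0 := by
  by_contra hp
  have hdeg := h.totalDegree (mul_ne_zero hp hq0)
  rw [totalDegree_mul_of_isDomain hp hq0, hq.totalDegree hq0] at hdeg
  omega

end HomogeneousComponents

section SquarefreeDerivatives

lemma dvd_of_forall_irreducible_dvd {R : Type*} [CommMonoidWithZero R] [Nontrivial R]
    [UniqueFactorizationMonoid R] {a b : R} (ha : Squarefree a)
    (h : ∀ p, Irreducible p → p ∣ a → p ∣ b) : a ∣ b := by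
  let := UniqueFactorizationMonoid.toGCDMonoid R
  obtain ⟨c, hc⟩ := gcd_dvd_left a b
  suffices hunit : IsUnit c by
    rw [hc, hunit.mul_right_dvd]
    exact gcd_dvd_right a b
  by_contra hunit
  obtain ⟨p, hp, hpc⟩ :=
    WfDvdMonoid.exists_irreducible_factor hunit (right_ne_zero_of_mul (hc ▸ ha.ne_zero))
  have hpa : p ∣ a := hc ▸ dvd_mul_of_dvd_right hpc _
  refine hp.not_isUnit (ha p ?_)
  rw [hc]
  exact mul_dvd_mul (dvd_gcd hpa (h p hp hpa)) hpc

variable {σ K : Type*} [Field K]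

lemma pderiv_eq_zero_of_dvd {p : MvPolynomial σ K} {i : σ} (h : p ∣ pderiv i p) :
    pderiv i p = 0 := by
  classical
  by_contra h0
  have degreeOf_le : degreeOf i p ≤ degreeOf i (pderiv i p) := by
    obtain ⟨c, hc⟩ := h
    rw [hc, degreeOf_mul_eq (left_ne_zero_of_mul (hc ▸ h0)) (right_ne_zero_of_mul (hc ▸ h0))]
    exact Nat.le_add_right _ _
  have exponent_lt : ∀ m ∈ (pderiv i p).support, m i < degreeOf i p := by
    intro m hm
    rw [mem_support_iff, coeff_pderiv] at hm
    simpa using monomial_le_degreeOf i (mem_support_iff.2 (left_ne_zero_of_mul hm))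
  obtain ⟨m, hm⟩ := support_nonempty.2 h0
  exact degreeOf_le.not_gt ((degreeOf_lt_iff (Nat.zero_lt_of_lt (exponent_lt m hm))).2 exponent_lt)

lemma isUnit_of_totalDegree_eq_zero {p : MvPolynomial σ K} (hp : p ≠ 0) (h : p.totalDegree = 0) :
    IsUnit p := by
  rw [totalDegree_eq_zero_iff_eq_C] at h
  rw [h] at hp ⊢
  exact (isUnit_iff_ne_zero.2 fun h0 => hp (by rw [h0, C_0])).map C

variable [CharZero K]

lemma isUnit_of_pderiv_eq_zero {p : MvPolynomial σ K} (hp : p ≠ 0) (h : ∀ i, pderiv i p = 0) :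
    IsUnit p := by
  classical
  have eq_C : p = C (coeff 0 p) := by
    ext m
    obtain rfl | hm := eq_or_ne m 0
    · simp
    obtain ⟨i, hi⟩ := Finsupp.ne_iff.1 hm
    have hcoeff := congrArg (coeff (m - Finsupp.single i 1)) (h i)
    rw [coeff_pderiv, tsub_add_cancel_of_le (Finsupp.single_le_iff.2 (Nat.one_le_iff_ne_zero.2 hi)),
      coeff_zero] at hcoeff
    rw [coeff_C, if_neg hm.symm]
    exact (mul_eq_zero.1 hcoeff).resolve_right (Nat.cast_add_one_ne_zero _)
  exact isUnit_of_totalDegree_eq_zero hp (totalDegree_eq_zero_iff_eq_C.2 eq_C)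

lemma exists_pderiv_ne_zero [Finite σ] {p : MvPolynomial σ K} {n : ℕ} (hn : n ≠ 0)
    (hp : p.IsHomogeneous n) (hp0 : p ≠ 0) : ∃ i, pderiv i p ≠ 0 := by
  have := Fintype.ofFinite σ
  by_contra! h
  have euler := hp.sum_X_mul_pderiv
  simp only [h, mul_zero, Finset.sum_const_zero] at euler
  exact smul_ne_zero hn hp0 euler.symm

lemma exists_not_dvd_pderiv {f p : MvPolynomial σ K} (hf : Squarefree f) (hp : Irreducible p)
    (hpf : p ∣ f) : ∃ i, ¬ p ∣ pderiv i f := by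
  by_contra! hdvd
  obtain ⟨u, rfl⟩ := hpf
  have hpu : ¬ p ∣ u := fun ⟨v, hv⟩ => hp.not_isUnit (hf p ⟨v, by rw [hv, mul_assoc]⟩)
  refine hp.not_isUnit (isUnit_of_pderiv_eq_zero hp.ne_zero fun i => pderiv_eq_zero_of_dvd ?_)
  have hi := hdvd i
  rw [pderiv_mul] at hi
  exact (hp.prime.dvd_or_dvd ((dvd_add_left (dvd_mul_right p _)).1 hi)).resolve_right hpu

lemma dvd_of_squarefree_of_dvd_mul_pderiv {f g : MvPolynomial σ K} (hf : Squarefree f)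
    (h : ∀ i, f ∣ g * pderiv i f) : f ∣ g := by
  refine dvd_of_forall_irreducible_dvd hf fun p hp hpf => ?_
  obtain ⟨i, hi⟩ := exists_not_dvd_pderiv hf hp hpf
  exact (hp.prime.dvd_or_dvd (hpf.trans (h i))).resolve_right hi

end SquarefreeDerivatives

section GradedPieces

variable {σ ι K : Type*} [Field K]

lemma finrank_map_add_finrank_inf_ker {V W : Type*} [AddCommGroup V] [Module K V] [AddCommGroup W]
    [Module K W] (P : Submodule K V) [FiniteDimensional K P] (g : V →ₗ[K] W) :
    Module.finrank K (P.map g) + Module.finrank K (P ⊓ LinearMap.ker g : Submodule K V) =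
      Module.finrank K P := by
  rw [← (g.domRestrict P).finrank_range_add_finrank_ker, LinearMap.range_domRestrict,
    LinearMap.ker_domRestrict,
    ← (Submodule.comapSubtypeEquivOfLe (inf_le_left : P ⊓ LinearMap.ker g ≤ P)).finrank_eq,
    Submodule.comap_inf, Submodule.comap_subtype_self, top_inf_eq]

instance finiteDimensional_homogeneousSubmodule [Finite σ] (k : ℕ) :
    FiniteDimensional K (homogeneousSubmodule σ K k) :=
  Module.Finite.iff_fg.2 (homogeneousSubmodule_fg σ K k)

lemma finrank_homogeneousSubmodule [Fintype σ] (k : ℕ) :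
    Module.finrank K (homogeneousSubmodule σ K k) =
      (k + Fintype.card σ - 1).choose k := by
  classical
  have support_eq : {m : σ →₀ ℕ | m.degree = k} =
      (Finset.finsuppAntidiag (Finset.univ : Finset σ) k : Set (σ →₀ ℕ)) := by
    ext m
    simp [Finsupp.degree_eq_sum]
  rw [homogeneousSubmodule_eq_finsupp_supported, support_eq,
    (AddMonoidAlgebra.supportedEquivFinsupp _).finrank_eq]
  simp [Module.finrank_finsupp_self, Finset.card_finsuppAntidiag_nat_eq_choose, add_comm]

lemma six_mul_finrank_homogeneousSubmodule (k : ℕ) :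
    6 * Module.finrank K (homogeneousSubmodule (Fin 4) K k) = (k + 1) * (k + 2) * (k + 3) := by
  rw [finrank_homogeneousSubmodule, Fintype.card_fin, Nat.add_sub_assoc (by norm_num),
    Nat.choose_symm_add]
  have := Nat.ascFactorial_eq_factorial_mul_choose k 3
  simp only [Nat.ascFactorial, Nat.factorial] at this
  linarith

/-- The elements of the free module on `ι` whose `i`-th coordinate is homogeneous of degree `δ i`,
that is, the degree `k` part of `⨁ S(δ i - k)`. -/
def gradedPi (K : Type*) [Field K] (σ : Type*) (δ : ι → ℕ) : Submodule K (ι → MvPolynomial σ K) :=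
  Submodule.pi Set.univ fun i => homogeneousSubmodule σ K (δ i)

lemma mem_gradedPi {δ : ι → ℕ} {v : ι → MvPolynomial σ K} :
    v ∈ gradedPi K σ δ ↔ ∀ i, (v i).IsHomogeneous (δ i) := by
  simp [gradedPi]

/-- `gradedPi` as the product of its coordinates. -/
def gradedPiEquiv (δ : ι → ℕ) :
    gradedPi K σ δ ≃ₗ[K] ∀ i, homogeneousSubmodule σ K (δ i) where
  toFun v i := ⟨v.1 i, mem_gradedPi.1 v.2 i⟩
  invFun w := ⟨fun i => w i, mem_gradedPi.2 fun i => (w i).2⟩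
  map_add' _ _ := rfl
  map_smul' _ _ := rfl

instance [Finite ι] [Finite σ] (δ : ι → ℕ) : FiniteDimensional K (gradedPi K σ δ) :=
  Module.Finite.equiv (gradedPiEquiv δ).symm

lemma finrank_gradedPi [Fintype ι] [Finite σ] (δ : ι → ℕ) :
    Module.finrank K (gradedPi K σ δ) =
      ∑ i, Module.finrank K (homogeneousSubmodule σ K (δ i)) := by
  rw [(gradedPiEquiv δ).finrank_eq, Module.finrank_pi_fintype]

/-- The coordinatewise homogeneous component of degree `q`. -/
def vecComponent (q : ℕ) : (ι → MvPolynomial σ K) →ₗ[K] ι → MvPolynomial σ K :=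
  (homogeneousComponent q).compLeft ι

@[simp]
lemma vecComponent_apply (q : ℕ) (v : ι → MvPolynomial σ K) (i : ι) :
    vecComponent q v i = homogeneousComponent q (v i) := rfl

lemma isProj_homogeneousComponent (q : ℕ) :
    LinearMap.IsProj (homogeneousSubmodule σ K q) (homogeneousComponent q) :=
  ⟨fun p => homogeneousComponent_isHomogeneous q p, fun _ hp => homogeneousComponent_eq_self hp⟩

lemma isProj_vecComponent (q : ℕ) :
    LinearMap.IsProj (gradedPi K σ fun _ : ι => q) (vecComponent q) :=
  ⟨fun v => mem_gradedPi.2 fun i => homogeneousComponent_isHomogeneous q (v i),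
    fun _ hv => funext fun i => homogeneousComponent_eq_self (mem_gradedPi.1 hv i)⟩

lemma vecComponent_smul {τ : ι → MvPolynomial σ K} {k n q : ℕ}
    (hτ : τ ∈ gradedPi K σ fun _ => n) (hq : k + n = q) (b : MvPolynomial σ K) :
    vecComponent q (b • τ) = homogeneousComponent k b • τ :=
  funext fun i => hq ▸ homogeneousComponent_add_mul (mem_gradedPi.1 hτ i) k

lemma mem_of_forall_vecComponent_mem [Finite ι] {N : Submodule K (ι → MvPolynomial σ K)}
    {v : ι → MvPolynomial σ K} (h : ∀ q, vecComponent q v ∈ N) : v ∈ N := by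
  have := Fintype.ofFinite ι
  have sum_components : v =
      ∑ q ∈ Finset.range ((Finset.univ.sup fun i => (v i).totalDegree) + 1), vecComponent q v := by
    ext1 i
    rw [Finset.sum_apply]
    simp only [vecComponent_apply]
    conv_lhs => rw [← sum_homogeneousComponent (v i)]
    refine Finset.sum_subset (Finset.range_mono (Nat.succ_le_succ
      (Finset.le_sup (f := fun i => (v i).totalDegree) (Finset.mem_univ i)))) fun q _ hq => ?_
    exact homogeneousComponent_eq_zero _ _ (by simpa [Nat.lt_succ_iff] using hq)
  rw [sum_components]
  exact N.sum_mem fun q _ => h q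

lemma map_vecComponent [Finite ι] {n : ℕ}
    (φ : (ι → MvPolynomial σ K) →ₗ[MvPolynomial σ K] MvPolynomial σ K)
    [DecidableEq ι] (hφ : ∀ i, (φ (Pi.single i 1)).IsHomogeneous n)
    (q : ℕ) (v : ι → MvPolynomial σ K) :
    φ (vecComponent q v) = homogeneousComponent (q + n) (φ v) := by
  have := Fintype.ofFinite ι
  rw [LinearMap.pi_apply_eq_sum_univ φ, LinearMap.pi_apply_eq_sum_univ φ v, map_sum]
  refine Finset.sum_congr rfl fun i _ => ?_
  have hφi := hφ i
  rw [show (Pi.single i 1 : ι → MvPolynomial σ K) = fun j => if i = j then 1 else 0 by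
    ext1 j; simp only [Pi.single_apply, eq_comm]] at hφi
  exact (homogeneousComponent_add_mul hφi q).symm

variable {M : Type*} [AddCommGroup M] [Module K M] [Module (MvPolynomial σ K) M]
  [IsScalarTower K (MvPolynomial σ K) M] [Fintype ι]
  {P : Submodule K M} {π : M →ₗ[K] M} {τ : ι → M} {δ : ι → ℕ}

lemma map_gradedPi_linearCombination (hπ : LinearMap.IsProj P π)
    (hτ : ∀ i (b : MvPolynomial σ K), π (b • τ i) = homogeneousComponent (δ i) b • τ i) :
    (gradedPi K σ δ).map
        ((Fintype.linearCombination (MvPolynomial σ K) τ).restrictScalars K) =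
      (Submodule.span (MvPolynomial σ K) (Set.range τ)).restrictScalars K ⊓ P := by
  ext m
  simp only [Submodule.mem_map, LinearMap.coe_restrictScalars, Submodule.mem_inf,
    Submodule.restrictScalars_mem, ← Fintype.range_linearCombination, LinearMap.mem_range,
    Fintype.linearCombination_apply]
  constructor
  · rintro ⟨b, hb, rfl⟩
    refine ⟨⟨b, rfl⟩, Submodule.sum_mem _ fun i _ => ?_⟩
    rw [← homogeneousComponent_eq_self (mem_gradedPi.1 hb i), ← hτ]
    exact hπ.map_mem _
  · rintro ⟨⟨b, rfl⟩, hP⟩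
    refine ⟨fun i => homogeneousComponent (δ i) (b i),
      mem_gradedPi.2 fun i => homogeneousComponent_isHomogeneous _ _, ?_⟩
    simp_rw [← hτ, ← map_sum]
    exact hπ.map_id _ hP

lemma finrank_span_inf_add_finrank_ker [Finite σ] (hπ : LinearMap.IsProj P π)
    (hτ : ∀ i (b : MvPolynomial σ K), π (b • τ i) = homogeneousComponent (δ i) b • τ i) :
    Module.finrank K ((Submodule.span (MvPolynomial σ K) (Set.range τ)).restrictScalars K ⊓ P :
        Submodule K M) +
      Module.finrank K (gradedPi K σ δ ⊓ LinearMap.ker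
        ((Fintype.linearCombination (MvPolynomial σ K) τ).restrictScalars K) : Submodule K _) =
      ∑ i, Module.finrank K (homogeneousSubmodule σ K (δ i)) := by
  rw [← map_gradedPi_linearCombination hπ hτ, finrank_map_add_finrank_inf_ker, finrank_gradedPi]

lemma finrank_span_inf [Finite σ] (hπ : LinearMap.IsProj P π)
    (hτ : ∀ i (b : MvPolynomial σ K), π (b • τ i) = homogeneousComponent (δ i) b • τ i)
    (hli : LinearIndependent (MvPolynomial σ K) τ) :
    Module.finrank K ((Submodule.span (MvPolynomial σ K) (Set.range τ)).restrictScalars K ⊓ P :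
        Submodule K M) =
      ∑ i, Module.finrank K (homogeneousSubmodule σ K (δ i)) := by
  have ker_eq_bot : LinearMap.ker
      ((Fintype.linearCombination (MvPolynomial σ K) τ).restrictScalars K) = ⊥ := by
    rw [LinearMap.ker_restrictScalars,
      LinearMap.ker_eq_bot.2 hli.fintypeLinearCombination_injective]
    rfl
  rw [← finrank_span_inf_add_finrank_ker hπ hτ, ker_eq_bot, inf_bot_eq, finrank_bot, add_zero]

end GradedPieces

section HilbertFunction

variable {σ K : Type*} [Field K]

/-- The Hilbert function `k ↦ dim (S/I)_k` of the quotient by a homogeneous ideal `I`, encoded as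
the dimension of the image of `S_k` in `S/I`. -/
def hilbertFunction (I : Ideal (MvPolynomial σ K)) (k : ℕ) : ℕ :=
  Module.finrank K ((homogeneousSubmodule σ K k).map (I.restrictScalars K).mkQ)

variable [Finite σ]

lemma hilbertFunction_add_finrank (I : Ideal (MvPolynomial σ K)) (k : ℕ) :
    hilbertFunction I k +
        Module.finrank K (I.restrictScalars K ⊓ homogeneousSubmodule σ K k : Submodule K _) =
      Module.finrank K (homogeneousSubmodule σ K k) := by
  rw [inf_comm, ← finrank_map_add_finrank_inf_ker (homogeneousSubmodule σ K k)
    (I.restrictScalars K).mkQ, Submodule.ker_mkQ]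
  rfl

lemma hilbertFunction_anti {I J : Ideal (MvPolynomial σ K)} (h : I ≤ J) (k : ℕ) :
    hilbertFunction J k ≤ hilbertFunction I k := by
  have := Submodule.finiteDimensional_of_le (inf_le_right :
    J.restrictScalars K ⊓ homogeneousSubmodule σ K k ≤ _)
  have hle := Submodule.finrank_mono (inf_le_inf_right (homogeneousSubmodule σ K k)
    (show I.restrictScalars K ≤ J.restrictScalars K from h))
  have hI := hilbertFunction_add_finrank I k
  have hJ := hilbertFunction_add_finrank J k
  omega

end HilbertFunction

section LinearForms

variable {σ K : Type*} [Field K] [Fintype σ]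

/-- The linear form `∑ i, v i • X i` with coefficient vector `v`. -/
def linearForm : (σ → K) →ₗ[K] MvPolynomial σ K := Fintype.linearCombination K X

lemma linearForm_single [DecidableEq σ] (i : σ) :
    linearForm (Pi.single i 1 : σ → K) = X i := by
  simp [linearForm]

lemma isHomogeneous_linearForm (v : σ → K) : (linearForm v).IsHomogeneous 1 :=
  IsHomogeneous.sum _ _ _ fun i _ => (homogeneousSubmodule σ K 1).smul_mem _ (isHomogeneous_X K i)

lemma linearForm_injective : Function.Injective (linearForm : (σ → K) → MvPolynomial σ K) := by
  classical
  refine (injective_iff_map_eq_zero linearForm).2 fun v hv => funext fun i => ?_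
  simpa [linearForm, Fintype.linearCombination_apply, smul_eval, Pi.single_apply] using
    congrArg (eval (Pi.single i (1 : K))) hv

lemma exists_linearForm_eq {p : MvPolynomial σ K} (hp : p.IsHomogeneous 1) :
    ∃ v, p = linearForm v := by
  have : p ∈ Submodule.span K (Set.range X) :=
    homogeneousSubmodule_one_eq_span_X (σ := σ) (R := K) ▸ hp
  rw [← Fintype.range_linearCombination] at this
  exact this.imp fun v => Eq.symm

/-- The endomorphism of the polynomial ring given on linear forms by `π`. When `π` is a projection,
its kernel is the ideal generated by the linear forms in `ker π`. -/
def linearSubstitution [DecidableEq σ] (π : (σ → K) →ₗ[K] σ → K) :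
    MvPolynomial σ K →ₐ[K] MvPolynomial σ K :=
  aeval fun i => linearForm (π (Pi.single i 1))

lemma linearSubstitution_linearForm [DecidableEq σ] (π : (σ → K) →ₗ[K] σ → K) (v : σ → K) :
    linearSubstitution π (linearForm v) = linearForm (π v) := by
  suffices h : (linearSubstitution π).toLinearMap ∘ₗ linearForm = linearForm ∘ₗ π from
    LinearMap.congr_fun h v
  ext i
  simp [linearSubstitution, linearForm_single]

lemma ker_linearSubstitution [DecidableEq σ] {s : Set (σ → K)} {π : (σ → K) →ₗ[K] σ → K}
    (hπ : IsIdempotentElem π) (hker : LinearMap.ker π = Submodule.span K s) :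
    RingHom.ker (linearSubstitution π) = Ideal.span (linearForm '' s) := by
  refine le_antisymm (fun p hp => ?_) (Ideal.span_le.2 ?_)
  · have linearForm_mem : ∀ v ∈ Submodule.span K s, linearForm v ∈ Ideal.span (linearForm '' s) :=
      fun v hv => Submodule.span_le_restrictScalars K _ _
        (Submodule.map_span (linearForm (K := K)) s ▸ Submodule.mem_map_of_mem hv)
    have mk_comp : Ideal.Quotient.mkₐ K (Ideal.span (linearForm '' s)) =
        (Ideal.Quotient.mkₐ K _).comp (linearSubstitution π) := by
      ext i
      simp only [AlgHom.comp_apply, Ideal.Quotient.mkₐ_eq_mk]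
      rw [Ideal.Quotient.eq, ← linearForm_single, linearSubstitution_linearForm, ← map_sub]
      refine linearForm_mem _ (hker ▸ ?_)
      rw [LinearMap.mem_ker, map_sub, ← Module.End.mul_apply, hπ.eq, sub_self]
    have := AlgHom.congr_fun mk_comp p
    rw [AlgHom.comp_apply, RingHom.mem_ker.1 hp, map_zero] at this
    exact Ideal.Quotient.eq_zero_iff_mem.1 this
  · rintro _ ⟨v, hv, rfl⟩
    have hπv : π v = 0 := LinearMap.mem_ker.1 (hker ▸ Submodule.subset_span hv)
    rw [SetLike.mem_coe, RingHom.mem_ker, linearSubstitution_linearForm, hπv, map_zero]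

lemma exists_ker_linearSubstitution_eq [DecidableEq σ] (s : Set (σ → K)) :
    ∃ π : (σ → K) →ₗ[K] σ → K, LinearMap.ker π = Submodule.span K s ∧
      RingHom.ker (linearSubstitution π) = Ideal.span (linearForm '' s) := by
  obtain ⟨W, hW⟩ := (Submodule.span K s).exists_isCompl
  have hker := Submodule.ker_projection hW.symm
  exact ⟨W.projection _ hW.symm, hker,
    ker_linearSubstitution (Submodule.isIdempotentElem_projection hW.symm) hker⟩

lemma isPrime_span_linearForm (s : Set (σ → K)) : (Ideal.span (linearForm '' s)).IsPrime := by
  classical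
  obtain ⟨π, -, hker⟩ := exists_ker_linearSubstitution_eq s
  exact hker ▸ RingHom.ker_isPrime _

lemma linearForm_mem_span_iff {s : Set (σ → K)} {v : σ → K} :
    linearForm v ∈ Ideal.span (linearForm '' s) ↔ v ∈ Submodule.span K s := by
  classical
  obtain ⟨π, hπ, hker⟩ := exists_ker_linearSubstitution_eq s
  rw [← hker, ← hπ, RingHom.mem_ker, linearSubstitution_linearForm, LinearMap.mem_ker,
    map_eq_zero_iff _ linearForm_injective]

lemma mem_span_linearForm_of_mul_mem {s : Set (σ → K)} {v : σ → K}
    (hv : v ∉ Submodule.span K s) {t : MvPolynomial σ K}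
    (h : linearForm v * t ∈ Ideal.span (linearForm '' s)) : t ∈ Ideal.span (linearForm '' s) :=
  ((isPrime_span_linearForm s).mem_or_mem h).resolve_left (mt linearForm_mem_span_iff.1 hv)

end LinearForms

section LinearFormsInPrimes

variable {σ K : Type*} [Field K] [IsAlgClosed K]

lemma exists_homogenize_eq_linear_mul (n : ℕ) {p : Polynomial K} (hp : p ≠ 0)
    (hn : p.natDegree ≤ n + 1) : ∃ (α β : K) (q : Polynomial K), (α ≠ 0 ∨ β ≠ 0) ∧ q ≠ 0 ∧
      q.natDegree ≤ n ∧ p.homogenize (n + 1) = (C α * X 0 + C β * X 1) * q.homogenize n := by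
  by_cases hdeg : p.natDegree = 0
  · refine ⟨0, 1, p, Or.inr one_ne_zero, hp, by omega, ?_⟩
    simpa [add_comm n] using
      Polynomial.homogenize_mul (1 : Polynomial K) p (m := 1) (n := n) (by simp) (by omega)
  · obtain ⟨r, hr⟩ := IsAlgClosed.exists_root p (mt Polynomial.natDegree_eq_of_degree_eq_some hdeg)
    obtain ⟨q, rfl⟩ := Polynomial.dvd_iff_isRoot.2 hr
    have hq0 : q ≠ 0 := right_ne_zero_of_mul hp
    have hqn : q.natDegree ≤ n := by
      rw [Polynomial.natDegree_mul (Polynomial.X_sub_C_ne_zero r) hq0,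
        Polynomial.natDegree_X_sub_C] at hn
      omega
    refine ⟨1, -r, q, Or.inl one_ne_zero, hq0, hqn, ?_⟩
    rw [add_comm, Polynomial.homogenize_mul _ _ (by simp) hqn, Polynomial.homogenize_sub,
      Polynomial.homogenize_X one_ne_zero, Polynomial.homogenize_C]
    simp [sub_eq_add_neg]

lemma exists_linear_mem_of_homogenize_mem {A : Type*} [CommRing A] [Algebra K A] {P : Ideal A}
    [P.IsPrime] (g : Fin 2 → A) (n : ℕ) : ∀ {p : Polynomial K}, p ≠ 0 → p.natDegree ≤ n →
      aeval g (p.homogenize n) ∈ P → ∃ α β : K, (α ≠ 0 ∨ β ≠ 0) ∧ α • g 0 + β • g 1 ∈ P := by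
  induction n with
  | zero =>
    intro p hp hn hmem
    rw [Polynomial.eq_C_of_natDegree_le_zero hn] at hp hmem
    simp only [Polynomial.homogenize_C, pow_zero, mul_one, algHom_C] at hmem
    have hunit : IsUnit (p.coeff 0) := isUnit_iff_ne_zero.2 fun h => hp (by rw [h, map_zero])
    exact absurd (Ideal.eq_top_of_isUnit_mem P hmem (hunit.map _)) (Ideal.IsPrime.ne_top ‹_›)
  | succ n ih =>
    intro p hp hn hmem
    obtain ⟨α, β, q, hαβ, hq, hqn, hfac⟩ := exists_homogenize_eq_linear_mul n hp hn
    rw [hfac, map_mul] at hmem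
    obtain h | h := Ideal.IsPrime.mem_or_mem ‹_› hmem
    · exact ⟨α, β, hαβ, by simpa [Algebra.smul_def] using h⟩
    · exact ih hq hqn h

variable [Fintype σ] {P : Ideal (MvPolynomial σ K)} [P.IsPrime] {n : ℕ}

lemma exists_linear_combination_mem_of_hilbertFunction_le (hP : hilbertFunction P n ≤ n)
    (v w : σ → K) : ∃ α β : K, (α ≠ 0 ∨ β ≠ 0) ∧ linearForm (α • v + β • w) ∈ P := by
  let Φ : Polynomial K →ₗ[K] MvPolynomial σ K :=
    (aeval ![linearForm v, linearForm w]).toLinearMap ∘ₗ Polynomial.homogenizeLM n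
  have hΦ (p : Polynomial K) : (Φ p).IsHomogeneous n := by
    have := (Polynomial.isHomogeneous_homogenize (n := n) p).aeval ![linearForm v, linearForm w]
      (n := 1) (fun i => by fin_cases i <;> exact isHomogeneous_linearForm _)
    rwa [one_mul] at this
  let ψ : Polynomial.degreeLT K (n + 1) →ₗ[K]
      (homogeneousSubmodule σ K n).map (P.restrictScalars K).mkQ :=
    LinearMap.codRestrict _ ((P.restrictScalars K).mkQ ∘ₗ Φ ∘ₗ Submodule.subtype _)
      fun p => Submodule.mem_map_of_mem (hΦ p)
  have : FiniteDimensional K (Polynomial.degreeLT K (n + 1)) :=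
    Module.Finite.equiv (Polynomial.degreeLTEquiv K (n + 1)).symm
  have hlt : Module.finrank K ((homogeneousSubmodule σ K n).map (P.restrictScalars K).mkQ) <
      Module.finrank K (Polynomial.degreeLT K (n + 1)) := by
    rw [(Polynomial.degreeLTEquiv K (n + 1)).finrank_eq, Module.finrank_fin_fun]
    exact Nat.lt_succ_of_le hP
  obtain ⟨p, hpker, hp0⟩ :=
    Submodule.exists_mem_ne_zero_of_ne_bot (LinearMap.ker_ne_bot_of_finrank_lt (f := ψ) hlt)
  have hp0' : (p : Polynomial K) ≠ 0 := fun h => hp0 (Subtype.ext h)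
  have hdeg : (p : Polynomial K).natDegree ≤ n := Nat.lt_succ_iff.1
    ((Polynomial.natDegree_lt_iff_degree_lt hp0').2 (Polynomial.mem_degreeLT.1 p.2))
  have hmem : Φ p ∈ P.restrictScalars K :=
    (Submodule.Quotient.mk_eq_zero _).1 (congrArg Subtype.val (LinearMap.mem_ker.1 hpker))
  obtain ⟨α, β, hαβ, h⟩ := exists_linear_mem_of_homogenize_mem _ n hp0' hdeg hmem
  exact ⟨α, β, hαβ, by simpa using h⟩

lemma exists_linearIndependent_linearForm_mem (hP : hilbertFunction P n ≤ n) :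
    ∃ v : Fin (Fintype.card σ - 1) → σ → K, LinearIndependent K v ∧ ∀ i, linearForm (v i) ∈ P := by
  let V : Submodule K (σ → K) := (P.restrictScalars K).comap linearForm
  have finrank_quotient_le : Module.finrank K ((σ → K) ⧸ V) ≤ 1 := by
    by_contra! hlt
    have := Module.nontrivial_of_finrank_pos (Nat.zero_lt_of_lt hlt)
    obtain ⟨x, hx⟩ := exists_ne (0 : (σ → K) ⧸ V)
    obtain ⟨y, hxy⟩ := exists_linearIndependent_pair_of_one_lt_finrank hlt hx
    obtain ⟨v, rfl⟩ := V.mkQ_surjective x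
    obtain ⟨w, rfl⟩ := V.mkQ_surjective y
    obtain ⟨α, β, hαβ, hmem⟩ := exists_linear_combination_mem_of_hilbertFunction_le hP v w
    have hzero : α • V.mkQ v + β • V.mkQ w = 0 := by
      rw [← map_smul, ← map_smul, ← map_add]
      exact (Submodule.Quotient.mk_eq_zero V).2 hmem
    have := LinearIndependent.pair_iff.1 hxy α β hzero
    tauto
  have hle : Fintype.card σ - 1 ≤ Module.finrank K V := by
    have := V.finrank_quotient_add_finrank
    rw [Module.finrank_fintype_fun_eq_card] at this
    omega
  obtain ⟨v, hv⟩ := exists_linearIndependent_of_le_finrank hle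
  exact ⟨fun i => v i, hv.map' V.subtype V.ker_subtype, fun i => (v i).2⟩

lemma exists_notMem_forall_linearForm_mul_mem {I : Ideal (MvPolynomial σ K)} (hI : I ≠ ⊤)
    (hn : hilbertFunction I n ≤ n) : ∃ p ∉ I, ∃ v : Fin (Fintype.card σ - 1) → σ → K,
      LinearIndependent K v ∧ ∀ i, linearForm (v i) * p ∈ I := by
  have := Ideal.Quotient.nontrivial_iff.2 hI
  obtain ⟨P, hP⟩ := associatedPrimes.nonempty (MvPolynomial σ K) (MvPolynomial σ K ⧸ I)
  obtain ⟨hprime, x, hx⟩ := isAssociatedPrime_iff.1 hP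
  obtain ⟨p, rfl⟩ := Ideal.Quotient.mk_surjective x
  have mem_P (a : MvPolynomial σ K) : a ∈ P ↔ a * p ∈ I := by
    rw [hx, Submodule.mem_colon_singleton, Submodule.mem_bot, ← Ideal.Quotient.eq_zero_iff_mem]
    rfl
  have hle : I ≤ P := fun a ha => (mem_P a).2 (Ideal.mul_mem_right _ _ ha)
  obtain ⟨v, hv, hvP⟩ :=
    exists_linearIndependent_linearForm_mem ((hilbertFunction_anti hle n).trans hn)
  refine ⟨p, fun hp => hprime.ne_top ((Ideal.eq_top_iff_one P).2 ((mem_P 1).2 ?_)), v, hv,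
    fun i => (mem_P _).1 (hvP i)⟩
  rwa [one_mul]

end LinearFormsInPrimes

section Depth

variable {R M Q ι : Type*} [CommRing R] [AddCommGroup M] [Module R M] [AddCommGroup Q] [Module R Q]
  [Finite ι]

variable {τ : ι → M} {N : Submodule R M} {D : M →ₗ[R] Q} {l₁ l₂ l₃ : R} {q : Q}

lemma exists_smul_eq_smul_of_three_smul_mem (hτ : LinearIndependent R τ)
    (hker : N ⊓ LinearMap.ker D = Submodule.span R (Set.range τ))
    (regular : ∀ t, l₃ * t ∈ Ideal.span {l₁, l₂} → t ∈ Ideal.span {l₁, l₂})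
    (h₁ : l₁ • q ∈ N.map D) (h₂ : l₂ • q ∈ N.map D) (h₃ : l₃ • q ∈ N.map D) :
    ∃ x ∈ N, ∃ y, D x = l₁ • q ∧ l₂ • x = l₁ • y := by
  have := Fintype.ofFinite ι
  let T := Fintype.linearCombination R τ
  have range_T : LinearMap.range T = N ⊓ LinearMap.ker D :=
    (Fintype.range_linearCombination R τ).trans hker.symm
  obtain ⟨σ₁, hσ₁, hD₁⟩ := h₁
  obtain ⟨σ₂, hσ₂, hD₂⟩ := h₂
  obtain ⟨σ₃, hσ₃, hD₃⟩ := h₃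
  have koszul {l l' : R} {σ σ' : M} (hσ : σ ∈ N) (hσ' : σ' ∈ N) (hD : D σ = l • q)
      (hD' : D σ' = l' • q) : ∃ a, T a = l' • σ - l • σ' := by
    rw [← LinearMap.mem_range, range_T]
    refine ⟨N.sub_mem (N.smul_mem _ hσ) (N.smul_mem _ hσ'), ?_⟩
    rw [SetLike.mem_coe, LinearMap.mem_ker, map_sub, map_smul, map_smul, hD, hD', smul_comm,
      sub_self]
  obtain ⟨a₁₂, h₁₂⟩ := koszul hσ₁ hσ₂ hD₁ hD₂
  obtain ⟨a₁₃, h₁₃⟩ := koszul hσ₁ hσ₃ hD₁ hD₃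
  obtain ⟨a₂₃, h₂₃⟩ := koszul hσ₂ hσ₃ hD₂ hD₃
  have cocycle : l₃ • a₁₂ - l₂ • a₁₃ + l₁ • a₂₃ = 0 := by
    refine hτ.fintypeLinearCombination_injective (?_ : T _ = T 0)
    rw [map_add, map_sub, map_smul, map_smul, map_smul, h₁₂, h₁₃, h₂₃, map_zero]
    module
  have coboundary (i : ι) : ∃ x y, x * l₁ + y * l₂ = a₁₂ i := by
    refine Ideal.mem_span_pair.1 (regular _ (Ideal.mem_span_pair.2 ⟨-a₂₃ i, a₁₃ i, ?_⟩))
    have := congrFun cocycle i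
    simp only [Pi.add_apply, Pi.sub_apply, Pi.smul_apply, smul_eq_mul, Pi.zero_apply] at this
    linear_combination -this
  choose x y hxy using coboundary
  have ha : a₁₂ = l₁ • x + l₂ • y := funext fun i => by
    simp only [← hxy, Pi.add_apply, Pi.smul_apply, smul_eq_mul]; ring
  rw [ha, map_add, map_smul, map_smul] at h₁₂
  obtain ⟨hyN, hyD⟩ : T y ∈ N ⊓ LinearMap.ker D := range_T ▸ ⟨y, rfl⟩
  refine ⟨σ₁ - T y, N.sub_mem hσ₁ hyN, σ₂ + T x, ?_, ?_⟩
  · rw [map_sub, hD₁, LinearMap.mem_ker.1 hyD, sub_zero]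
  · linear_combination (norm := module) -h₁₂

lemma mem_map_of_three_smul_mem (hτ : LinearIndependent R τ)
    (hker : N ⊓ LinearMap.ker D = Submodule.span R (Set.range τ))
    (regular₁ : IsSMulRegular Q l₁)
    (regular₂ : ∀ x ∈ N, ∀ y, l₂ • x = l₁ • y → ∃ z ∈ N, x = l₁ • z)
    (regular₃ : ∀ t, l₃ * t ∈ Ideal.span {l₁, l₂} → t ∈ Ideal.span {l₁, l₂})
    (h₁ : l₁ • q ∈ N.map D) (h₂ : l₂ • q ∈ N.map D) (h₃ : l₃ • q ∈ N.map D) : q ∈ N.map D := by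
  obtain ⟨x, hx, y, hD, hxy⟩ := exists_smul_eq_smul_of_three_smul_mem hτ hker regular₃ h₁ h₂ h₃
  obtain ⟨z, hz, rfl⟩ := regular₂ x hx y hxy
  exact ⟨z, hz, regular₁ ((map_smul D l₁ z).symm.trans hD)⟩

end Depth

section Syzygies

variable {f : S4} {ρ ρ1 ρ2 : Fin 4 → S4} {d q s : ℕ}

lemma vecHomog_iff_mem_gradedPi : VecHomog ρ q ↔ ρ ∈ gradedPi ℂ (Fin 4) fun _ => q :=
  mem_gradedPi.symm

lemma vecComponent_mem_AR4 (hf : f.IsHomogeneous d) (hρ : ρ ∈ AR4 f) (q : ℕ) :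
    vecComponent q ρ ∈ AR4 f := by
  have hsingle (i : Fin 4) : (jacPair f (Pi.single i 1)).IsHomogeneous (d - 1) := by
    simpa [jacPair, Pi.single_apply] using hf.pderiv
  rw [AR4, LinearMap.mem_ker, map_vecComponent _ hsingle, LinearMap.mem_ker.1 hρ, map_zero]

lemma milnor4_add_four_mul_finrank (hf : f.IsHomogeneous (s + 1)) (k : ℕ) :
    milnor4 f (k + s) + 4 * Module.finrank ℂ (homogeneousSubmodule (Fin 4) ℂ k) =
      Module.finrank ℂ (homogeneousSubmodule (Fin 4) ℂ (k + s)) + arDim f k := by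
  have hmilnor : milnor4 f (k + s) + _ = _ := hilbertFunction_add_finrank (JacIdeal f) (k + s)
  have hpderiv (i : Fin 4) : (pderiv i f).IsHomogeneous s := hf.pderiv
  have hcomponent (i : Fin 4) (b : S4) : homogeneousComponent (k + s) (b • pderiv i f) =
      homogeneousComponent k b • pderiv i f := homogeneousComponent_add_mul (hpderiv i) k
  have hjac := finrank_span_inf_add_finrank_ker (isProj_homogeneousComponent (k + s)) hcomponent
  have hpair : (Fintype.linearCombination S4 fun i => pderiv i f) = jacPair f := rfl
  have hAR : gradedPi ℂ (Fin 4) (fun _ => k) ⊓ LinearMap.ker ((jacPair f).restrictScalars ℂ) =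
      ARgr f k := inf_comm _ _
  rw [hpair, hAR, Finset.sum_const, Finset.card_univ, Fintype.card_fin, smul_eq_mul] at hjac
  rw [← hmilnor, ← hjac, arDim, JacIdeal]
  ring

/-- The Koszul syzygy `∂ᵢf · ∂ⱼ - ∂ⱼf · ∂ᵢ`. -/
def koszulSyzygy (f : S4) (i j : Fin 4) : Fin 4 → S4 :=
  Pi.single j (pderiv i f) - Pi.single i (pderiv j f)

lemma koszulSyzygy_mem_AR4 (f : S4) (i j : Fin 4) : koszulSyzygy f i j ∈ AR4 f := by
  change ∑ k, koszulSyzygy f i j k * pderiv k f = 0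
  simp [koszulSyzygy, sub_mul, Pi.single_apply, Finset.sum_sub_distrib, mul_comm (pderiv i f)]

lemma vecHomog_koszulSyzygy (hf : f.IsHomogeneous d) (i j : Fin 4) :
    VecHomog (koszulSyzygy f i j) (d - 1) := by
  have hsingle (i j : Fin 4) : VecHomog (Pi.single j (pderiv i f)) (d - 1) := fun k => by
    rw [Pi.single_apply]
    split_ifs
    exacts [hf.pderiv, isHomogeneous_zero _ _ _]
  exact fun k => (hsingle i j k).sub (hsingle j i k)

lemma exists_smul_koszulSyzygy_ne_smul {i : Fin 4} (hi : pderiv i f ≠ 0) {a : S4} (ha : a ≠ 0)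
    (ρ : Fin 4 → S4) : ∃ j, ∀ c : S4, a • koszulSyzygy f i j ≠ c • ρ := by
  by_contra! h
  obtain ⟨j, k, hij, hik, hjk⟩ : ∃ j k : Fin 4, i ≠ j ∧ i ≠ k ∧ j ≠ k := by
    fin_cases i <;> decide
  obtain ⟨c, hc⟩ := h j
  obtain ⟨c', hc'⟩ := h k
  have diagonal : ∀ {l}, i ≠ l → koszulSyzygy f i l l = pderiv i f := fun hl => by
    simp [koszulSyzygy, hl.symm]
  have hkj : koszulSyzygy f i k j = 0 := by simp [koszulSyzygy, hjk, hij.symm]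
  have hcρ : a * pderiv i f = c * ρ j := by simpa [diagonal hij] using congrFun hc j
  have hc0 : c' * ρ j = 0 := by simpa [hkj] using (congrFun hc' j).symm
  have hρj : ρ j ≠ 0 := right_ne_zero_of_mul (hcρ ▸ mul_ne_zero ha hi)
  have := congrFun hc' k
  rw [(mul_eq_zero.1 hc0).resolve_right hρj] at this
  simp [diagonal hik, ha, hi] at this

lemma linearIndependent_of_tamePair (hd : d ≠ 0) (hf : f.IsHomogeneous d) (hf0 : f ≠ 0)
    (hne : ∀ a : S4, ρ2 ≠ a • ρ1) (htame : TamePair f ρ1 ρ2) :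
    LinearIndependent S4 ![ρ1, ρ2] := by
  refine LinearIndependent.pair_iff.2 fun a b hab => ?_
  by_contra hzero
  have ha : a ≠ 0 := by
    rintro rfl
    have hρ2 : ρ2 = 0 := by simpa [show b ≠ 0 by simpa using hzero] using hab
    exact hne 0 (by rw [hρ2, zero_smul])
  have proportional : ∀ ρ ∈ AR4 f, ∀ q, VecHomog ρ q → ∃ c : S4, a • ρ = c • ρ2 := by
    intro ρ hρ q hq
    have hminors : MinorsVanish3 ρ1 ρ2 ρ := fun j => by
      refine Matrix.exists_vecMul_eq_zero_iff.1 ⟨![a, b, 0], fun h => ha (congrFun h 0), ?_⟩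
      ext1 k
      simpa [Matrix.vecMul, dotProduct, Fin.sum_univ_three] using congrFun hab (j.succAbove k)
    obtain ⟨u, v, rfl⟩ := htame ρ hρ q hq hminors
    exact ⟨a * v - u * b, by linear_combination (norm := module) u • hab⟩
  obtain ⟨i, hi⟩ := exists_pderiv_ne_zero hd hf hf0
  obtain ⟨j, hj⟩ := exists_smul_koszulSyzygy_ne_smul hi ha ρ2
  obtain ⟨c, hc⟩ :=
    proportional _ (koszulSyzygy_mem_AR4 f i j) _ (vecHomog_koszulSyzygy hf i j)
  exact hj c hc

end Syzygies

section EulerDeterminant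

lemma isHomogeneous_det {σ R n : Type*} [CommRing R] [Fintype n] [DecidableEq n]
    {M : Matrix n n (MvPolynomial σ R)} {r : n → ℕ} (hM : ∀ i j, (M i j).IsHomogeneous (r i)) :
    M.det.IsHomogeneous (∑ i, r i) := by
  rw [Matrix.det_apply]
  refine IsHomogeneous.sum _ _ _ fun π _ => ?_
  have hprod := IsHomogeneous.prod Finset.univ (fun i => M (π i) i) (fun i => r (π i))
    fun i _ => hM _ _
  rw [Equiv.sum_comp π] at hprod
  obtain h | h := Int.units_eq_one_or (Equiv.Perm.sign π)
  · rwa [h, one_smul]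
  · rw [h, Units.neg_smul, one_smul]
    exact hprod.neg

/-- The determinant `det(E, ρ1, ρ2, ρ)`, for the Euler field `E`, as a linear function of `ρ`. -/
def eulerDet (ρ1 ρ2 : Fin 4 → S4) : (Fin 4 → S4) →ₗ[S4] S4 :=
  (detRowAlternating (n := Fin 4) (R := S4)).toMultilinearMap.toLinearMap
    ![fun i => X i, ρ1, ρ2, 0] 3

variable {f : S4} {ρ ρ1 ρ2 : Fin 4 → S4} {d e1 e2 q : ℕ}

lemma eulerDet_apply (ρ1 ρ2 ρ : Fin 4 → S4) : eulerDet ρ1 ρ2 ρ = (EMat ρ1 ρ2 ρ).det := by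
  have hupdate : (Function.update ![fun i => X i, ρ1, ρ2, 0] 3 ρ : Fin 4 → Fin 4 → S4) =
      ![fun i => X i, ρ1, ρ2, ρ] := by
    ext i : 1
    fin_cases i <;> simp [Function.update]
  simp only [eulerDet, MultilinearMap.toLinearMap_apply, hupdate]
  rfl

lemma span_le_ker_eulerDet (ρ1 ρ2 : Fin 4 → S4) :
    Submodule.span S4 (Set.range ![ρ1, ρ2]) ≤ LinearMap.ker (eulerDet ρ1 ρ2) := by
  rw [Submodule.span_le, Set.range_subset_iff, Fin.forall_fin_two]
  simp only [SetLike.mem_coe, LinearMap.mem_ker, eulerDet_apply]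
  exact ⟨Matrix.det_zero_of_row_eq (i := 1) (j := 3) (by decide) rfl,
    Matrix.det_zero_of_row_eq (i := 2) (j := 3) (by decide) rfl⟩

lemma eulerDet_smul_add_smul (ρ1 ρ2 : Fin 4 → S4) (a b : S4) :
    eulerDet ρ1 ρ2 (a • ρ1 + b • ρ2) = 0 := by
  refine span_le_ker_eulerDet ρ1 ρ2 ?_
  rw [Matrix.range_cons_cons_empty, Submodule.mem_span_pair]
  exact ⟨a, b, rfl⟩

lemma isHomogeneous_eulerDet (h₁ : VecHomog ρ1 e1) (h₂ : VecHomog ρ2 e2) (h : VecHomog ρ q) :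
    (eulerDet ρ1 ρ2 ρ).IsHomogeneous (q + (1 + e1 + e2)) := by
  rw [eulerDet_apply, add_comm]
  refine Fin.sum_univ_four ![1, e1, e2, q] ▸ isHomogeneous_det fun i j => ?_
  fin_cases i
  exacts [isHomogeneous_X _ _, h₁ j, h₂ j, h j]

lemma eulerDet_vecComponent (h₁ : VecHomog ρ1 e1) (h₂ : VecHomog ρ2 e2) (q : ℕ)
    (ρ : Fin 4 → S4) : eulerDet ρ1 ρ2 (vecComponent q ρ) =
      homogeneousComponent (q + (1 + e1 + e2)) (eulerDet ρ1 ρ2 ρ) := by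
  refine map_vecComponent _ (fun i => ?_) q ρ
  have hsingle : VecHomog (Pi.single i 1) 0 := fun j => by
    rw [Pi.single_apply]
    split_ifs
    exacts [isHomogeneous_one _ _, isHomogeneous_zero _ _ _]
  simpa using isHomogeneous_eulerDet h₁ h₂ hsingle

lemma adjugate_EMat_mul_eq_eulerDet_mul_pderiv (hf : f.IsHomogeneous d) (h₁ : ρ1 ∈ AR4 f)
    (h₂ : ρ2 ∈ AR4 f) (h : ρ ∈ AR4 f) (j : Fin 4) :
    (EMat ρ1 ρ2 ρ).adjugate j 0 * (d • f) = eulerDet ρ1 ρ2 ρ * pderiv j f := by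
  have mulVec_gradient : EMat ρ1 ρ2 ρ *ᵥ (fun i => pderiv i f) = Pi.single 0 (d • f) := by
    ext1 i
    fin_cases i
    exacts [hf.sum_X_mul_pderiv, h₁, h₂, h]
  have hadj := congrFun (congrArg ((EMat ρ1 ρ2 ρ).adjugate *ᵥ ·) mulVec_gradient) j
  simp only [Matrix.mulVec_mulVec, Matrix.adjugate_mul, Matrix.smul_mulVec, Matrix.one_mulVec,
    Matrix.mulVec_single, Pi.smul_apply, smul_eq_mul, Matrix.col_apply,
    MulOpposite.smul_eq_mul_unop, MulOpposite.unop_op] at hadj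
  rw [eulerDet_apply, ← hadj]

lemma dvd_eulerDet (hf : f.IsHomogeneous d) (hred : Squarefree f) (h₁ : ρ1 ∈ AR4 f)
    (h₂ : ρ2 ∈ AR4 f) (h : ρ ∈ AR4 f) : f ∣ eulerDet ρ1 ρ2 ρ :=
  dvd_of_squarefree_of_dvd_mul_pderiv hred fun j => by
    rw [← adjugate_EMat_mul_eq_eulerDet_mul_pderiv hf h₁ h₂ h]
    exact dvd_mul_of_dvd_right (dvd_smul_of_dvd d dvd_rfl) _

lemma minorsVanish3_of_eulerDet_eq_zero (hd : d ≠ 0) (hf : f.IsHomogeneous d) (hf0 : f ≠ 0)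
    (h₁ : ρ1 ∈ AR4 f) (h₂ : ρ2 ∈ AR4 f) (h : ρ ∈ AR4 f) (h0 : eulerDet ρ1 ρ2 ρ = 0) :
    MinorsVanish3 ρ1 ρ2 ρ := by
  intro j
  have hadj := adjugate_EMat_mul_eq_eulerDet_mul_pderiv hf h₁ h₂ h j
  rw [h0, zero_mul, Matrix.adjugate_fin_succ_eq_det_submatrix] at hadj
  have := (mul_eq_zero.1 hadj).resolve_right (smul_ne_zero hd hf0)
  exact (mul_eq_zero.1 this).resolve_left (pow_ne_zero _ (neg_ne_zero.2 one_ne_zero))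

end EulerDeterminant

/-- `ρ1` and `ρ2` are homogeneous of degrees `e1`, `e2` and form a basis of the submodule of
`AR(f)` on which `det(E, ρ1, ρ2, ·)` vanishes. Then `AR(f) / (S ρ1 + S ρ2)` is torsion-free of
rank one, hence a shifted ideal, as in Bourbaki's theorem. -/
structure IsBourbakiPair (f : S4) (ρ1 ρ2 : Fin 4 → S4) (e1 e2 : ℕ) : Prop where
  vecHomog₁ : VecHomog ρ1 e1
  vecHomog₂ : VecHomog ρ2 e2
  linearIndependent : LinearIndependent S4 ![ρ1, ρ2]
  inf_ker : AR4 f ⊓ LinearMap.ker (eulerDet ρ1 ρ2) = Submodule.span S4 (Set.range ![ρ1, ρ2])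

lemma isBourbakiPair_of_tamePair {f : S4} {d e1 e2 : ℕ} {ρ1 ρ2 : Fin 4 → S4} (hd : d ≠ 0)
    (hf : f.IsHomogeneous d) (hf0 : f ≠ 0) (mem₁ : ρ1 ∈ AR4 f) (mem₂ : ρ2 ∈ AR4 f)
    (homog₁ : VecHomog ρ1 e1) (homog₂ : VecHomog ρ2 e2) (hne : ∀ a : S4, ρ2 ≠ a • ρ1)
    (htame : TamePair f ρ1 ρ2) : IsBourbakiPair f ρ1 ρ2 e1 e2 := by
  have hli := linearIndependent_of_tamePair hd hf hf0 hne htame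
  refine ⟨homog₁, homog₂, hli, le_antisymm ?_ (le_inf ?_ (span_le_ker_eulerDet ρ1 ρ2))⟩
  · rintro ρ ⟨hρ, hdet⟩
    refine mem_of_forall_vecComponent_mem
      (N := (Submodule.span S4 (Set.range ![ρ1, ρ2])).restrictScalars ℂ) fun q => ?_
    have hdet_q : eulerDet ρ1 ρ2 (vecComponent q ρ) = 0 := by
      rw [eulerDet_vecComponent homog₁ homog₂, LinearMap.mem_ker.1 hdet, map_zero]
    have hρ_q := vecComponent_mem_AR4 hf hρ q
    obtain ⟨a, b, hab⟩ := htame _ hρ_q q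
      (vecHomog_iff_mem_gradedPi.2 ((isProj_vecComponent q).map_mem ρ))
      (minorsVanish3_of_eulerDet_eq_zero hd hf hf0 mem₁ mem₂ hρ_q hdet_q)
    rw [Submodule.restrictScalars_mem, Matrix.range_cons_cons_empty, Submodule.mem_span_pair]
    exact ⟨a, b, hab.symm⟩
  · rw [Submodule.span_le, Set.range_subset_iff, Fin.forall_fin_two]
    exact ⟨mem₁, mem₂⟩

/-- The ideal of all `det(E, ρ1, ρ2, ρ) / f` for `ρ ∈ AR(f)`. -/
def bourbakiIdeal (f : S4) (ρ1 ρ2 : Fin 4 → S4) : Ideal S4 :=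
  ((AR4 f).map (eulerDet ρ1 ρ2)).comap (LinearMap.lsmul S4 S4 f)

lemma mem_bourbakiIdeal {f p : S4} {ρ1 ρ2 : Fin 4 → S4} :
    p ∈ bourbakiIdeal f ρ1 ρ2 ↔ ∃ ρ ∈ AR4 f, eulerDet ρ1 ρ2 ρ = f * p := by
  simp [bourbakiIdeal]

namespace IsBourbakiPair

variable {f : S4} {d e1 e2 e3 : ℕ} {ρ1 ρ2 : Fin 4 → S4}

lemma span_le_AR4 (h : IsBourbakiPair f ρ1 ρ2 e1 e2) :
    Submodule.span S4 (Set.range ![ρ1, ρ2]) ≤ AR4 f := h.inf_ker ▸ inf_le_left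

lemma mem_AR4_left (h : IsBourbakiPair f ρ1 ρ2 e1 e2) : ρ1 ∈ AR4 f :=
  h.span_le_AR4 (Submodule.subset_span ⟨0, rfl⟩)

lemma mem_AR4_right (h : IsBourbakiPair f ρ1 ρ2 e1 e2) : ρ2 ∈ AR4 f :=
  h.span_le_AR4 (Submodule.subset_span ⟨1, rfl⟩)

lemma exists_eulerDet_eq_mul (h : IsBourbakiPair f ρ1 ρ2 e1 e2) (hf : f.IsHomogeneous d)
    (hred : Squarefree f) {ρ : Fin 4 → S4} (hρ : ρ ∈ AR4 f) :
    ∃ p ∈ bourbakiIdeal f ρ1 ρ2, eulerDet ρ1 ρ2 ρ = f * p := by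
  obtain ⟨p, hp⟩ := dvd_eulerDet hf hred h.mem_AR4_left h.mem_AR4_right hρ
  exact ⟨p, mem_bourbakiIdeal.2 ⟨ρ, hρ, hp⟩, hp⟩

lemma isHomogeneous_of_eulerDet_eq_mul (h : IsBourbakiPair f ρ1 ρ2 e1 e2)
    (hf : f.IsHomogeneous d) (hf0 : f ≠ 0) (hd : e1 + e2 + e3 + 1 = d) {ρ : Fin 4 → S4} {p : S4}
    {k : ℕ} (hρ : VecHomog ρ (k + e3)) (hp : eulerDet ρ1 ρ2 ρ = f * p) : p.IsHomogeneous k := by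
  refine isHomogeneous_of_mul_right hf hf0 ?_
  have := isHomogeneous_eulerDet h.vecHomog₁ h.vecHomog₂ hρ
  rwa [hp, mul_comm, show k + e3 + (1 + e1 + e2) = k + d by omega] at this

lemma exists_vecHomog_eulerDet_eq_mul (h : IsBourbakiPair f ρ1 ρ2 e1 e2)
    (hf : f.IsHomogeneous d) (hd : e1 + e2 + e3 + 1 = d) {p : S4} {k : ℕ}
    (hp : p.IsHomogeneous k) (hpI : p ∈ bourbakiIdeal f ρ1 ρ2) :
    ∃ ρ ∈ ARgr f (k + e3), eulerDet ρ1 ρ2 ρ = f * p := by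
  obtain ⟨ρ, hρ, hdet⟩ := mem_bourbakiIdeal.1 hpI
  refine ⟨vecComponent (k + e3) ρ,
    ⟨vecComponent_mem_AR4 hf hρ _, (isProj_vecComponent (k + e3)).map_mem ρ⟩, ?_⟩
  rw [eulerDet_vecComponent h.vecHomog₁ h.vecHomog₂, hdet, homogeneousComponent_eq_self]
  have := hf.mul hp
  rwa [show k + e3 + (1 + e1 + e2) = d + k by omega]

lemma finrank_bourbakiIdeal_inf (h : IsBourbakiPair f ρ1 ρ2 e1 e2) (hf : f.IsHomogeneous d)
    (hred : Squarefree f) (hd : e1 + e2 + e3 + 1 = d) (k : ℕ) :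
    Module.finrank ℂ ((bourbakiIdeal f ρ1 ρ2).restrictScalars ℂ ⊓
        homogeneousSubmodule (Fin 4) ℂ k : Submodule ℂ S4) =
      Module.finrank ℂ ((ARgr f (k + e3)).map ((eulerDet ρ1 ρ2).restrictScalars ℂ)) := by
  have hmul : Function.Injective (LinearMap.mulLeft ℂ f) := mul_right_injective₀ hred.ne_zero
  have image_eq : ((bourbakiIdeal f ρ1 ρ2).restrictScalars ℂ ⊓
        homogeneousSubmodule (Fin 4) ℂ k).map (LinearMap.mulLeft ℂ f) =
      (ARgr f (k + e3)).map ((eulerDet ρ1 ρ2).restrictScalars ℂ) := by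
    ext g
    constructor
    · rintro ⟨p, ⟨hpI, hp⟩, rfl⟩
      exact h.exists_vecHomog_eulerDet_eq_mul hf hd hp hpI
    · rintro ⟨ρ, ⟨hρ, hhom⟩, rfl⟩
      obtain ⟨p, hpI, hp⟩ := h.exists_eulerDet_eq_mul hf hred hρ
      exact ⟨p, ⟨hpI, h.isHomogeneous_of_eulerDet_eq_mul hf hred.ne_zero hd
        (vecHomog_iff_mem_gradedPi.2 hhom) hp⟩, hp.symm⟩
  rw [(Submodule.equivMapOfInjective _ hmul _).finrank_eq, image_eq]

lemma vecComponent_smul_cons (h : IsBourbakiPair f ρ1 ρ2 e1 e2) {k₁ k₂ q : ℕ} (h₁ : k₁ + e1 = q)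
    (h₂ : k₂ + e2 = q) (i : Fin 2) (b : S4) : vecComponent q (b • ![ρ1, ρ2] i) =
      homogeneousComponent (![k₁, k₂] i) b • ![ρ1, ρ2] i := by
  fin_cases i
  exacts [vecComponent_smul (vecHomog_iff_mem_gradedPi.1 h.vecHomog₁) h₁ b,
    vecComponent_smul (vecHomog_iff_mem_gradedPi.1 h.vecHomog₂) h₂ b]

lemma arDim_eq (h : IsBourbakiPair f ρ1 ρ2 e1 e2) (hf : f.IsHomogeneous d) (hred : Squarefree f)
    (hd : e1 + e2 + e3 + 1 = d) {k k₁ k₂ : ℕ} (h₁ : k₁ + e1 = k + e3) (h₂ : k₂ + e2 = k + e3) :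
    arDim f (k + e3) =
      Module.finrank ℂ (homogeneousSubmodule (Fin 4) ℂ k₁) +
      Module.finrank ℂ (homogeneousSubmodule (Fin 4) ℂ k₂) +
      Module.finrank ℂ ((bourbakiIdeal f ρ1 ρ2).restrictScalars ℂ ⊓
        homogeneousSubmodule (Fin 4) ℂ k : Submodule ℂ S4) := by
  have : FiniteDimensional ℂ (ARgr f (k + e3)) :=
    Submodule.finiteDimensional_of_le (S₂ := gradedPi ℂ (Fin 4) fun _ => k + e3) inf_le_right
  have ker_eq : ARgr f (k + e3) ⊓ LinearMap.ker ((eulerDet ρ1 ρ2).restrictScalars ℂ) =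
      (Submodule.span S4 (Set.range ![ρ1, ρ2])).restrictScalars ℂ ⊓
        gradedPi ℂ (Fin 4) fun _ => k + e3 := by
    rw [← h.inf_ker, ARgr, inf_right_comm]
    rfl
  rw [arDim, ← finrank_map_add_finrank_inf_ker _ ((eulerDet ρ1 ρ2).restrictScalars ℂ), ker_eq,
    finrank_span_inf (isProj_vecComponent _) (h.vecComponent_smul_cons h₁ h₂) h.linearIndependent,
    ← h.finrank_bourbakiIdeal_inf hf hred hd, Fin.sum_univ_two]
  exact add_comm _ _

lemma mem_bourbakiIdeal_of_linearForm_mul_mem (h : IsBourbakiPair f ρ1 ρ2 e1 e2)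
    {v : Fin 3 → Fin 4 → ℂ} (hv : LinearIndependent ℂ v) {p : S4}
    (hp : ∀ i, linearForm (v i) * p ∈ bourbakiIdeal f ρ1 ρ2) : p ∈ bourbakiIdeal f ρ1 ρ2 := by
  have notMem_span {i : Fin 3} {s : Set (Fin 3)} (hi : i ∉ s) :
      v i ∉ Submodule.span ℂ (v '' s) := hv.notMem_span_image hi
  have hl₀ : linearForm (v 0) ≠ 0 :=
    (map_ne_zero_iff _ linearForm_injective).2 (hv.ne_zero 0)
  refine mem_map_of_three_smul_mem h.linearIndependent h.inf_ker (l₁ := linearForm (v 0))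
    (l₂ := linearForm (v 1)) (l₃ := linearForm (v 2)) (mul_right_injective₀ hl₀) ?_ ?_
    ?_ ?_ ?_
  · intro x hx y hxy
    have hdvd (i : Fin 4) : linearForm (v 0) ∣ x i := by
      have hmem := mem_span_linearForm_of_mul_mem (s := v '' {0}) (t := x i)
        (notMem_span (i := 1) (by simp))
      rw [Set.image_singleton, Set.image_singleton, Ideal.mem_span_singleton,
        Ideal.mem_span_singleton] at hmem
      exact hmem ⟨y i, congrFun hxy i⟩
    choose z hz using hdvd
    have hxz : x = linearForm (v 0) • z := funext hz
    rw [AR4, LinearMap.mem_ker, hxz, map_smul] at hx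
    exact ⟨z, (smul_eq_zero.1 hx).resolve_left hl₀, hxz⟩
  · intro t ht
    rw [← Set.image_pair (fun i => linearForm (v i)) 0 1, ← Set.image_image linearForm] at ht ⊢
    exact mem_span_linearForm_of_mul_mem (notMem_span (by simp)) ht
  all_goals
    rw [← map_smul]
    exact hp _

lemma bourbakiIdeal_eq_top (h : IsBourbakiPair f ρ1 ρ2 e1 e2) {n : ℕ}
    (hn : hilbertFunction (bourbakiIdeal f ρ1 ρ2) n ≤ n) : bourbakiIdeal f ρ1 ρ2 = ⊤ := by
  by_contra hI
  obtain ⟨p, hp, v, hv, hvp⟩ := exists_notMem_forall_linearForm_mul_mem hI hn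
  exact hp (h.mem_bourbakiIdeal_of_linearForm_mul_mem hv hvp)

lemma isFreeWith_of_bourbakiIdeal_eq_top (h : IsBourbakiPair f ρ1 ρ2 e1 e2)
    (hf : f.IsHomogeneous d) (hred : Squarefree f) (hd : e1 + e2 + e3 + 1 = d) (h12 : e1 ≤ e2)
    (h23 : e2 ≤ e3) (hI : bourbakiIdeal f ρ1 ρ2 = ⊤) : IsFreeWith f e1 e2 e3 := by
  obtain ⟨ρ3, ⟨hρ3, hhom⟩, hdet⟩ := h.exists_vecHomog_eulerDet_eq_mul hf hd
    (isHomogeneous_one (Fin 4) ℂ) ((Ideal.eq_top_iff_one _).1 hI)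
  rw [zero_add] at hhom
  rw [mul_one] at hdet
  refine ⟨h12, h23, ρ1, ρ2, ρ3, h.mem_AR4_left, h.mem_AR4_right, hρ3, h.vecHomog₁, h.vecHomog₂,
    vecHomog_iff_mem_gradedPi.2 hhom, fun ρ hρ => ?_, fun a b c habc => ?_⟩
  · obtain ⟨p, -, hp⟩ := h.exists_eulerDet_eq_mul hf hred hρ
    have hdiff : ρ - p • ρ3 ∈ Submodule.span S4 (Set.range ![ρ1, ρ2]) := by
      rw [← h.inf_ker]
      refine ⟨sub_mem hρ (Submodule.smul_mem _ _ hρ3), ?_⟩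
      rw [SetLike.mem_coe, LinearMap.mem_ker, map_sub, map_smul, hp, hdet, smul_eq_mul, mul_comm,
        sub_self]
    rw [Matrix.range_cons_cons_empty, Submodule.mem_span_pair] at hdiff
    obtain ⟨a, b, hab⟩ := hdiff
    exact ⟨a, b, p, by rw [hab, sub_add_cancel]⟩
  · have hc : c = 0 := by
      have := congrArg (eulerDet ρ1 ρ2) habc
      rw [map_add, eulerDet_smul_add_smul, map_smul, hdet, map_zero, zero_add, smul_eq_mul] at this
      exact (mul_eq_zero.1 this).resolve_right hred.ne_zero
    rw [hc, zero_smul, add_zero] at habc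
    exact ⟨(LinearIndependent.pair_iff.1 h.linearIndependent a b habc).1,
      (LinearIndependent.pair_iff.1 h.linearIndependent a b habc).2, hc⟩

end IsBourbakiPair

section SyzygyCounts

variable {σ ι K : Type*} [Field K]

lemma finrank_gradedPi_inf_span_singleton {a : ι → MvPolynomial σ K} {δ ε : ι → ℕ} {m : ℕ}
    (ha : ∀ i, (a i).IsHomogeneous (ε i)) (ha0 : a ≠ 0) (hδ : ∀ i, m + ε i = δ i) :
    Module.finrank K (gradedPi K σ δ ⊓
        (Submodule.span (MvPolynomial σ K) {a}).restrictScalars K : Submodule K _) =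
      Module.finrank K (homogeneousSubmodule σ K m) := by
  have hinj : Function.Injective
      ((LinearMap.toSpanSingleton (MvPolynomial σ K) _ a).restrictScalars K) :=
    smul_left_injective _ ha0
  have image_eq : (homogeneousSubmodule σ K m).map
        ((LinearMap.toSpanSingleton (MvPolynomial σ K) _ a).restrictScalars K) =
      gradedPi K σ δ ⊓ (Submodule.span (MvPolynomial σ K) {a}).restrictScalars K := by
    ext b
    simp only [Submodule.mem_inf, mem_gradedPi, Submodule.restrictScalars_mem,
      Submodule.mem_span_singleton, Submodule.mem_map, LinearMap.coe_restrictScalars,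
      LinearMap.toSpanSingleton_apply]
    constructor
    · rintro ⟨c, hc, rfl⟩
      exact ⟨fun i => hδ i ▸ IsHomogeneous.mul hc (ha i), c, rfl⟩
    · rintro ⟨hb, c, rfl⟩
      obtain ⟨i, hi⟩ := Function.ne_iff.1 ha0
      exact ⟨c, isHomogeneous_of_mul_right (ha i) hi (hδ i ▸ hb i), rfl⟩
  rw [← image_eq, ((homogeneousSubmodule σ K m).equivMapOfInjective _ hinj).finrank_eq]

variable {M : Type*} [AddCommGroup M] [Module K M] [Module (MvPolynomial σ K) M]
  [IsScalarTower K (MvPolynomial σ K) M] [Finite σ] [Fintype ι]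
  {P : Submodule K M} {π : M →ₗ[K] M} {τ : ι → M} {a : ι → MvPolynomial σ K} {δ ε : ι → ℕ} {m : ℕ}

lemma finrank_span_inf_add_finrank_of_ker_eq (hπ : LinearMap.IsProj P π)
    (hτ : ∀ i (b : MvPolynomial σ K), π (b • τ i) = homogeneousComponent (δ i) b • τ i)
    (ha : ∀ i, (a i).IsHomogeneous (ε i)) (ha0 : a ≠ 0) (hδ : ∀ i, m + ε i = δ i)
    (hker : LinearMap.ker (Fintype.linearCombination (MvPolynomial σ K) τ) =
      Submodule.span (MvPolynomial σ K) {a}) :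
    Module.finrank K ((Submodule.span (MvPolynomial σ K) (Set.range τ)).restrictScalars K ⊓ P :
        Submodule K M) + Module.finrank K (homogeneousSubmodule σ K m) =
      ∑ i, Module.finrank K (homogeneousSubmodule σ K (δ i)) := by
  rw [← finrank_span_inf_add_finrank_ker hπ hτ, LinearMap.ker_restrictScalars, hker,
    finrank_gradedPi_inf_span_singleton ha ha0 hδ]

lemma finrank_span_inf_add_finrank_le (hπ : LinearMap.IsProj P π)
    (hτ : ∀ i (b : MvPolynomial σ K), π (b • τ i) = homogeneousComponent (δ i) b • τ i)
    (ha : ∀ i, (a i).IsHomogeneous (ε i)) (ha0 : a ≠ 0) (hδ : ∀ i, m + ε i = δ i)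
    (hrel : Fintype.linearCombination (MvPolynomial σ K) τ a = 0) :
    Module.finrank K ((Submodule.span (MvPolynomial σ K) (Set.range τ)).restrictScalars K ⊓ P :
        Submodule K M) + Module.finrank K (homogeneousSubmodule σ K m) ≤
      ∑ i, Module.finrank K (homogeneousSubmodule σ K (δ i)) := by
  have span_le : (Submodule.span (MvPolynomial σ K) {a}).restrictScalars K ≤
      LinearMap.ker ((Fintype.linearCombination (MvPolynomial σ K) τ).restrictScalars K) :=
    LinearMap.ker_restrictScalars K (Fintype.linearCombination (MvPolynomial σ K) τ) ▸
      Submodule.restrictScalars_mono K ((Submodule.span_singleton_le_iff_mem _ _).2 hrel)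
  have := Submodule.finiteDimensional_of_le (inf_le_left : gradedPi K σ δ ⊓
    LinearMap.ker ((Fintype.linearCombination (MvPolynomial σ K) τ).restrictScalars K) ≤ _)
  rw [← finrank_span_inf_add_finrank_ker hπ hτ, ← finrank_gradedPi_inf_span_singleton ha ha0 hδ]
  exact Nat.add_le_add_left (Submodule.finrank_mono (inf_le_inf_left _ span_le)) _

end SyzygyCounts

section PrincipalAndTwoGenerated

variable {σ K : Type*} [Field K] [Finite σ] {p q : MvPolynomial σ K} {m n : ℕ}

lemma finrank_le_hilbertFunction_span_singleton_add (hp : p.IsHomogeneous n) (j : ℕ) :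
    Module.finrank K (homogeneousSubmodule σ K (j + n)) ≤
      hilbertFunction (Ideal.span {p}) (j + n) +
        Module.finrank K (homogeneousSubmodule σ K j) := by
  have hcomponent (_ : Unit) (b : MvPolynomial σ K) :
      homogeneousComponent (j + n) (b • p) = homogeneousComponent j b • p :=
    homogeneousComponent_add_mul hp j
  have hcount := finrank_span_inf_add_finrank_ker (isProj_homogeneousComponent (j + n)) hcomponent
  rw [Set.range_const, Finset.univ_unique, Finset.sum_singleton] at hcount
  rw [← hilbertFunction_add_finrank (Ideal.span {p}), ← hcount, add_le_add_iff_left]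
  exact Nat.le_add_right _ _

lemma finrank_add_finrank_le_hilbertFunction_span_pair_add (hp : p.IsHomogeneous m)
    (hq : q.IsHomogeneous n) (hp0 : p ≠ 0) (j : ℕ) :
    Module.finrank K (homogeneousSubmodule σ K (j + m + n)) +
        Module.finrank K (homogeneousSubmodule σ K j) ≤
      hilbertFunction (Ideal.span {p, q}) (j + m + n) +
        (Module.finrank K (homogeneousSubmodule σ K (j + n)) +
        Module.finrank K (homogeneousSubmodule σ K (j + m))) := by
  have hcomponent (i : Fin 2) (b : MvPolynomial σ K) :
      homogeneousComponent (j + m + n) (b • ![p, q] i) =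
        homogeneousComponent (![j + n, j + m] i) b • ![p, q] i := by
    fin_cases i
    exacts [add_right_comm j m n ▸ homogeneousComponent_add_mul hp (j + n),
      homogeneousComponent_add_mul hq (j + m)]
  have koszul : Fintype.linearCombination (MvPolynomial σ K) ![p, q] ![q, -p] = 0 := by
    simp [Fintype.linearCombination_apply, mul_comm]
  have hcount := finrank_span_inf_add_finrank_le (isProj_homogeneousComponent (j + m + n))
    hcomponent (a := ![q, -p]) (ε := ![n, m]) (m := j) (Fin.forall_fin_two.2 ⟨hq, hp.neg⟩)
    (fun h => hp0 (neg_eq_zero.1 (congrFun h 1))) (Fin.forall_fin_two.2 ⟨rfl, rfl⟩) koszul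
  rw [Matrix.range_cons_cons_empty, Fin.sum_univ_two] at hcount
  rw [← hilbertFunction_add_finrank (Ideal.span {p, q}), add_assoc]
  exact Nat.add_le_add_left hcount _

end PrincipalAndTwoGenerated

section LinearHilbertFunction

variable {K : Type*} [Field K] {p q : MvPolynomial (Fin 4) K} {m n : ℕ}

lemma add_one_mul_add_two_le_hilbertFunction_span_singleton (hp : p.IsHomogeneous n) (hn : 1 ≤ n)
    (j : ℕ) : (j + n + 1) * (j + n + 2) ≤ 2 * hilbertFunction (Ideal.span {p}) (j + n) := by
  have hcount := finrank_le_hilbertFunction_span_singleton_add hp j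
  have hj := six_mul_finrank_homogeneousSubmodule (K := K) j
  have hjn := six_mul_finrank_homogeneousSubmodule (K := K) (j + n)
  obtain ⟨n, rfl⟩ := Nat.exists_eq_add_of_le' hn
  have hmono : (j + 1) * (j + 2) * (j + 3) ≤ (j + n + 1) * (j + n + 2) * (j + n + 3) := by
    gcongr <;> omega
  nlinarith

lemma mul_mul_le_hilbertFunction_span_pair (hp : p.IsHomogeneous m) (hq : q.IsHomogeneous n)
    (hp0 : p ≠ 0) (j : ℕ) :
    m * n * (2 * j + m + n + 4) ≤ 2 * hilbertFunction (Ideal.span {p, q}) (j + m + n) := by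
  have hcount := finrank_add_finrank_le_hilbertFunction_span_pair_add hp hq hp0 j
  have hj := six_mul_finrank_homogeneousSubmodule (K := K) j
  have hjm := six_mul_finrank_homogeneousSubmodule (K := K) (j + m)
  have hjn := six_mul_finrank_homogeneousSubmodule (K := K) (j + n)
  have hjmn := six_mul_finrank_homogeneousSubmodule (K := K) (j + m + n)
  nlinarith

variable {c : ℤ} {N : ℕ}

lemma not_span_pair_le_span_singleton
    (h : ∀ k, N ≤ k → (hilbertFunction (Ideal.span {p, q}) k : ℤ) = k + c)
    {r : MvPolynomial (Fin 4) K} (hr : r.IsHomogeneous n) (hn : 1 ≤ n) :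
    ¬ Ideal.span {p, q} ≤ Ideal.span {r} := by
  intro hle
  have hlinear := h (N + c.natAbs + n) (by omega)
  have hquad := add_one_mul_add_two_le_hilbertFunction_span_singleton hr hn (N + c.natAbs)
  have hanti := hilbertFunction_anti hle (N + c.natAbs + n)
  have hc := Int.le_natAbs (a := c)
  zify at hquad hanti
  generalize (hilbertFunction (Ideal.span {r}) (N + c.natAbs + n) : ℤ) = H at *
  have : (0:ℤ) ≤ N := by positivity
  push_cast at *
  nlinarith

lemma exists_linearForm_of_hilbertFunction_span_pair
    (h : ∀ k, N ≤ k → (hilbertFunction (Ideal.span {p, q}) k : ℤ) = k + c)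
    (hp : p.IsHomogeneous m) (hq : q.IsHomogeneous n) (hm : 1 ≤ m) (hn : 1 ≤ n) :
    m = 1 ∧ n = 1 ∧ ∃ v w : Fin 4 → K, p = linearForm v ∧ q = linearForm w ∧
      LinearIndependent K ![v, w] := by
  have not_dvd_right : ¬ p ∣ q := fun hpq =>
    not_span_pair_le_span_singleton h hp hm (Ideal.span_le.2 (by
      rintro _ (rfl | rfl)
      exacts [Ideal.mem_span_singleton_self _, Ideal.mem_span_singleton.2 hpq]))
  have not_dvd_left : ¬ q ∣ p := fun hqp =>
    not_span_pair_le_span_singleton h hq hn (Ideal.span_le.2 (by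
      rintro _ (rfl | rfl)
      exacts [Ideal.mem_span_singleton.2 hqp, Ideal.mem_span_singleton_self _]))
  have hp0 : p ≠ 0 := fun hp0 => not_dvd_left (hp0 ▸ dvd_zero q)
  have hmn : m * n ≤ 1 := by
    by_contra! hmn
    have hlinear := h (N + c.natAbs + m + n) (by omega)
    have hquad := mul_mul_le_hilbertFunction_span_pair hp hq hp0 (N + c.natAbs)
    have := Nat.mul_le_mul_right (2 * (N + c.natAbs) + m + n + 4) hmn
    omega
  obtain ⟨rfl, rfl⟩ : m = 1 ∧ n = 1 := by constructor <;> nlinarith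
  obtain ⟨v, rfl⟩ := exists_linearForm_eq hp
  obtain ⟨w, rfl⟩ := exists_linearForm_eq hq
  have hv : v ≠ 0 := fun hv => hp0 (by rw [hv, map_zero])
  refine ⟨rfl, rfl, v, w, rfl, rfl, (LinearIndependent.pair_iff' hv).2 fun t ht => ?_⟩
  exact not_dvd_right (by rw [← ht, map_smul]; exact dvd_smul_of_dvd t dvd_rfl)

lemma exists_eq_mul_of_mul_linearForm_add_eq_zero {σ : Type*} [Fintype σ] {v w : σ → K}
    (hvw : LinearIndependent K ![v, w]) {b b' : MvPolynomial σ K}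
    (h : b * linearForm v + b' * linearForm w = 0) :
    ∃ t, b = t * linearForm w ∧ b' = -(t * linearForm v) := by
  have hv : v ≠ 0 := hvw.ne_zero 0
  have hw : w ∉ Submodule.span K {v} := by
    rw [Submodule.mem_span_singleton]
    exact fun ⟨t, ht⟩ => (LinearIndependent.pair_iff' hv).1 hvw t ht
  have hb' : b' ∈ Ideal.span (linearForm '' {v}) := by
    refine mem_span_linearForm_of_mul_mem hw ?_
    rw [Set.image_singleton, Ideal.mem_span_singleton]
    exact ⟨-b, by linear_combination h⟩
  rw [Set.image_singleton, Ideal.mem_span_singleton] at hb'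
  obtain ⟨t, rfl⟩ := hb'
  refine ⟨-t, mul_right_cancel₀ ((map_ne_zero_iff _ linearForm_injective).2 hv) ?_, by ring⟩
  linear_combination h

end LinearHilbertFunction

lemma arDim_add_finrank_of_isNearlyFreeWith {f : S4} {d e1 e2 e3 k k₁ k₂ : ℕ}
    (hnf : IsNearlyFreeWith f d e1 e2 (e3 + 1)) (h₁ : k₁ + e1 = k + 2 + e3)
    (h₂ : k₂ + e2 = k + 2 + e3) :
    arDim f (k + 2 + e3) + Module.finrank ℂ (homogeneousSubmodule (Fin 4) ℂ k) =
      Module.finrank ℂ (homogeneousSubmodule (Fin 4) ℂ k₁) +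
      Module.finrank ℂ (homogeneousSubmodule (Fin 4) ℂ k₂) +
      Module.finrank ℂ (homogeneousSubmodule (Fin 4) ℂ (k + 1)) +
      Module.finrank ℂ (homogeneousSubmodule (Fin 4) ℂ (k + 1)) := by
  obtain ⟨h12, h23, -, ρ, a, hρ, q0, q1, q2, q3, hgen, a0, a1, a2, a3, ha0, hrel, hker⟩ := hnf
  have hk : k + 1 + (e3 + 1) = k + 2 + e3 := by omega
  have hcomponent (i : Fin 4) (b : S4) : vecComponent (k + 2 + e3) (b • ρ i) =
      homogeneousComponent (![k₁, k₂, k + 1, k + 1] i) b • ρ i := by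
    fin_cases i
    exacts [vecComponent_smul (vecHomog_iff_mem_gradedPi.1 q0) h₁ b,
      vecComponent_smul (vecHomog_iff_mem_gradedPi.1 q1) h₂ b,
      vecComponent_smul (vecHomog_iff_mem_gradedPi.1 q2) hk b,
      vecComponent_smul (vecHomog_iff_mem_gradedPi.1 q3) hk b]
  have span_eq : Submodule.span S4 (Set.range ρ) = AR4 f := by
    refine le_antisymm (Submodule.span_le.2 (Set.range_subset_iff.2 hρ)) fun σ hσ => ?_
    obtain ⟨b, rfl⟩ := hgen σ hσ
    exact Submodule.sum_mem _ fun i _ => Submodule.smul_mem _ _ (Submodule.subset_span ⟨i, rfl⟩)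
  have ker_eq : LinearMap.ker (Fintype.linearCombination S4 ρ) = Submodule.span S4 {a} := by
    refine le_antisymm (fun b hb => ?_) ((Submodule.span_singleton_le_iff_mem _ _).2 hrel)
    obtain ⟨c, rfl⟩ := hker b hb
    exact Submodule.mem_span_singleton.2 ⟨c, rfl⟩
  have hdegree (i : Fin 4) : k + ![e3 + 1 - e1 + 1, e3 + 1 - e2 + 1, 1, 1] i =
      ![k₁, k₂, k + 1, k + 1] i := by
    fin_cases i <;> dsimp <;> omega
  have hcount := finrank_span_inf_add_finrank_of_ker_eq (isProj_vecComponent (k + 2 + e3))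
    hcomponent (ε := ![e3 + 1 - e1 + 1, e3 + 1 - e2 + 1, 1, 1]) (m := k)
    (fun i => by fin_cases i; exacts [a0, a1, a2, a3]) ha0
    hdegree ker_eq
  rw [span_eq, Fin.sum_univ_four] at hcount
  exact hcount

namespace IsBourbakiPair

variable {f : S4} {d e1 e2 e3 : ℕ} {ρ1 ρ2 : Fin 4 → S4}

lemma hilbertFunction_bourbakiIdeal_add_milnor4 (h : IsBourbakiPair f ρ1 ρ2 e1 e2)
    (hf : f.IsHomogeneous d) (hred : Squarefree f) (hd : e1 + e2 + e3 + 1 = d) {k k₁ k₂ : ℕ}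
    (h₁ : k₁ + e1 = k + e3) (h₂ : k₂ + e2 = k + e3) :
    hilbertFunction (bourbakiIdeal f ρ1 ρ2) k + milnor4 f (k + e3 + (e1 + e2 + e3)) +
        4 * Module.finrank ℂ (homogeneousSubmodule (Fin 4) ℂ (k + e3)) =
      Module.finrank ℂ (homogeneousSubmodule (Fin 4) ℂ k) +
      Module.finrank ℂ (homogeneousSubmodule (Fin 4) ℂ k₁) +
      Module.finrank ℂ (homogeneousSubmodule (Fin 4) ℂ k₂) +
      Module.finrank ℂ (homogeneousSubmodule (Fin 4) ℂ (k + e3 + (e1 + e2 + e3))) := by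
  have hmilnor := milnor4_add_four_mul_finrank (s := e1 + e2 + e3) (hd ▸ hf) (k + e3)
  have hsyz := h.arDim_eq hf hred hd h₁ h₂
  have hI := hilbertFunction_add_finrank (bourbakiIdeal f ρ1 ρ2) k
  linarith

lemma exists_hilbertFunction_bourbakiIdeal_eq (h : IsBourbakiPair f ρ1 ρ2 e1 e2)
    (hf : f.IsHomogeneous d) (hred : Squarefree f) (hd : e1 + e2 + e3 + 1 = d) (h12 : e1 ≤ e2)
    (h23 : e2 ≤ e3) {a b : ℤ} {N : ℕ} (hN : ∀ k : ℕ, N ≤ k → (milnor4 f k : ℤ) = a * k + b) :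
    ∃ c : ℤ, ∀ k, N ≤ k → (hilbertFunction (bourbakiIdeal f ρ1 ρ2) k : ℤ) =
      (((e1 : ℤ) + e2 + e3) ^ 2 - ((e1 : ℤ) * e2 + (e1 : ℤ) * e3 + (e2 : ℤ) * e3) - a) * k +
        c := by
  let s (k : ℕ) : ℤ := Module.finrank ℂ (homogeneousSubmodule (Fin 4) ℂ k)
  have six_mul_s (k : ℕ) : 6 * s k = ((k + 1) * (k + 2) * (k + 3) : ℕ) :=
    congrArg ((↑) : ℕ → ℤ) (six_mul_finrank_homogeneousSubmodule (K := ℂ) k)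
  obtain ⟨u, rfl⟩ := Nat.exists_eq_add_of_le h12
  obtain ⟨v, rfl⟩ := Nat.exists_eq_add_of_le h23
  let e3 := e1 + u + v
  let t := e1 + (e1 + u) + e3
  -- `c` is what the count below gives at `k = 0` once all binomials are read as polynomials.
  refine ⟨s 0 + s (u + v) + s v + s (e3 + t) - 4 * s e3 - a * (e3 + t : ℕ) - b, fun k hk => ?_⟩
  have hcount := h.hilbertFunction_bourbakiIdeal_add_milnor4 hf hred hd (k := k)
    (k₁ := k + (u + v)) (k₂ := k + v) (by omega) (by omega)
  zify at hcount
  rw [hN _ (by omega)] at hcount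
  change _ + 4 * s (k + e3) = s k + s (k + (u + v)) + s (k + v) + s (k + e3 + t) at hcount
  refine mul_left_cancel₀ (show (6 : ℤ) ≠ 0 by norm_num) ?_
  have h₀ := six_mul_s 0
  have h₁ := six_mul_s (u + v)
  have h₂ := six_mul_s v
  have h₃ := six_mul_s (e3 + t)
  have h₄ := six_mul_s e3
  have h₅ := six_mul_s k
  have h₆ := six_mul_s (k + (u + v))
  have h₇ := six_mul_s (k + v)
  have h₈ := six_mul_s (k + e3 + t)
  have h₉ := six_mul_s (k + e3)
  simp only [t, e3] at *
  push_cast at *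
  linear_combination 6 * hcount - h₀ - h₁ - h₂ - h₃ + 4 * h₄ + h₅ + h₆ + h₇ + h₈ - 4 * h₉

lemma one_le_of_hilbertFunction_eq (h : IsBourbakiPair f ρ1 ρ2 e1 e2)
    (hI : bourbakiIdeal f ρ1 ρ2 ≠ ⊤) {x c : ℤ} {N : ℕ}
    (hN : ∀ k, N ≤ k → (hilbertFunction (bourbakiIdeal f ρ1 ρ2) k : ℤ) = x * k + c) : 1 ≤ x := by
  by_contra! hx
  refine hI (h.bourbakiIdeal_eq_top (n := N + c.natAbs) ?_)
  have hxk : x * (N + c.natAbs : ℕ) ≤ 0 :=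
    mul_nonpos_of_nonpos_of_nonneg (Int.lt_add_one_iff.1 hx) (Nat.cast_nonneg _)
  have := hN (N + c.natAbs) (Nat.le_add_right _ _)
  omega

lemma hilbertFunction_of_isNearlyFreeWith (h : IsBourbakiPair f ρ1 ρ2 e1 e2)
    (hf : f.IsHomogeneous d) (hred : Squarefree f) (hd : e1 + e2 + e3 + 1 = d)
    (hnf : IsNearlyFreeWith f d e1 e2 (e3 + 1)) (k : ℕ) :
    hilbertFunction (bourbakiIdeal f ρ1 ρ2) (k + 2) = k + 3 := by
  obtain ⟨h12, h23, -⟩ := id hnf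
  obtain ⟨k₁, h₁⟩ := Nat.exists_eq_add_of_le' (show e1 ≤ k + 2 + e3 by omega)
  obtain ⟨k₂, h₂⟩ := Nat.exists_eq_add_of_le' (show e2 ≤ k + 2 + e3 by omega)
  have hnearly := arDim_add_finrank_of_isNearlyFreeWith hnf h₁.symm h₂.symm
  have hsyz := h.arDim_eq hf hred hd h₁.symm h₂.symm
  have hI := hilbertFunction_add_finrank (bourbakiIdeal f ρ1 ρ2) (k + 2)
  have hk := six_mul_finrank_homogeneousSubmodule (K := ℂ) k
  have hk₁ := six_mul_finrank_homogeneousSubmodule (K := ℂ) (k + 1)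
  have hk₂ := six_mul_finrank_homogeneousSubmodule (K := ℂ) (k + 2)
  linarith

lemma eq_one_of_isNearlyFreeWith (h : IsBourbakiPair f ρ1 ρ2 e1 e2) (hf : f.IsHomogeneous d)
    (hred : Squarefree f) (hd : e1 + e2 + e3 + 1 = d)
    (hnf : IsNearlyFreeWith f d e1 e2 (e3 + 1)) {x c : ℤ} {N : ℕ}
    (hN : ∀ k, N ≤ k → (hilbertFunction (bourbakiIdeal f ρ1 ρ2) k : ℤ) = x * k + c) : x = 1 := by
  have h₂ := hN (N + 2) (by omega)
  have h₃ := hN (N + 3) (by omega)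
  rw [h.hilbertFunction_of_isNearlyFreeWith hf hred hd hnf] at h₂
  rw [h.hilbertFunction_of_isNearlyFreeWith hf hred hd hnf (N + 1)] at h₃
  push_cast at h₂ h₃
  linarith

variable {q : ℕ} {ρ3 ρ4 : Fin 4 → S4}

lemma exists_one_le_isHomogeneous_of_eulerDet_eq_mul (h : IsBourbakiPair f ρ1 ρ2 e1 e2)
    (hf : f.IsHomogeneous d) (hf0 : f ≠ 0) (hd : e1 + e2 + e3 + 1 = d)
    (hI : bourbakiIdeal f ρ1 ρ2 ≠ ⊤) {ρ : Fin 4 → S4} (hρ : ρ ∈ AR4 f) (hq : VecHomog ρ q)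
    {p : S4} (hp : eulerDet ρ1 ρ2 ρ = f * p) :
    ∃ m, 1 ≤ m ∧ p.IsHomogeneous m ∧ (p ≠ 0 → q = m + e3) := by
  obtain rfl | hp0 := eq_or_ne p 0
  · exact ⟨1, le_rfl, isHomogeneous_zero _ _ _, fun h => absurd rfl h⟩
  have hdet := isHomogeneous_eulerDet h.vecHomog₁ h.vecHomog₂ hq
  rw [hp, mul_comm] at hdet
  have hle : e3 ≤ q := by
    by_contra! hlt
    exact hp0 (eq_zero_of_mul_isHomogeneous_of_lt hf hf0 hdet (by omega))
  obtain ⟨m, rfl⟩ := Nat.exists_eq_add_of_le' hle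
  have hm := h.isHomogeneous_of_eulerDet_eq_mul hf hf0 hd hq hp
  refine ⟨m, Nat.one_le_iff_ne_zero.2 fun hm0 => hI ?_, hm, fun _ => rfl⟩
  have hunit : IsUnit p := isUnit_of_totalDegree_eq_zero hp0 ((hm.totalDegree hp0).trans hm0)
  exact Ideal.eq_top_of_isUnit_mem _ (mem_bourbakiIdeal.2 ⟨ρ, hρ, hp⟩) hunit

lemma bourbakiIdeal_eq_span_pair (hf0 : f ≠ 0) (h₃ : ρ3 ∈ AR4 f) (h₄ : ρ4 ∈ AR4 f) {p3 p4 : S4}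
    (hp3 : eulerDet ρ1 ρ2 ρ3 = f * p3) (hp4 : eulerDet ρ1 ρ2 ρ4 = f * p4)
    (hgen : ∀ ρ ∈ AR4 f, ∃ b1 b2 b3 b4 : S4, ρ = b1 • ρ1 + b2 • ρ2 + b3 • ρ3 + b4 • ρ4) :
    bourbakiIdeal f ρ1 ρ2 = Ideal.span {p3, p4} := by
  refine le_antisymm (fun p hp => ?_) (Ideal.span_le.2 ?_)
  · obtain ⟨ρ, hρ, hdet⟩ := mem_bourbakiIdeal.1 hp
    obtain ⟨b1, b2, b3, b4, rfl⟩ := hgen ρ hρ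
    rw [map_add, map_add, eulerDet_smul_add_smul, map_smul, map_smul, hp3, hp4, smul_eq_mul,
      smul_eq_mul] at hdet
    refine Ideal.mem_span_pair.2 ⟨b3, b4, mul_left_cancel₀ hf0 ?_⟩
    linear_combination hdet
  · rintro _ (rfl | rfl)
    exacts [mem_bourbakiIdeal.2 ⟨ρ3, h₃, hp3⟩, mem_bourbakiIdeal.2 ⟨ρ4, h₄, hp4⟩]

lemma exists_smul_add_smul_eq_of_eulerDet_eq_zero (h : IsBourbakiPair f ρ1 ρ2 e1 e2)
    {ρ : Fin 4 → S4} (hρ : ρ ∈ AR4 f) (hq : VecHomog ρ q) (hdet : eulerDet ρ1 ρ2 ρ = 0)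
    {k₁ k₂ : ℕ} (h₁ : k₁ + e1 = q) (h₂ : k₂ + e2 = q) :
    ∃ u v : S4, u.IsHomogeneous k₁ ∧ v.IsHomogeneous k₂ ∧ u • ρ1 + v • ρ2 = ρ := by
  have hmem : ρ ∈ (Submodule.span S4 (Set.range ![ρ1, ρ2])).restrictScalars ℂ ⊓
      gradedPi ℂ (Fin 4) fun _ => q :=
    ⟨h.inf_ker ▸ ⟨hρ, hdet⟩, vecHomog_iff_mem_gradedPi.1 hq⟩
  rw [← map_gradedPi_linearCombination (isProj_vecComponent q) (h.vecComponent_smul_cons h₁ h₂)]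
    at hmem
  obtain ⟨b, hb, rfl⟩ := hmem
  refine ⟨b 0, b 1, mem_gradedPi.1 hb 0, mem_gradedPi.1 hb 1, ?_⟩
  exact (Fin.sum_univ_two fun i => b i • ![ρ1, ρ2] i).symm

lemma exists_eq_smul_of_sum_smul_eq_zero (hf0 : f ≠ 0) (hli : LinearIndependent S4 ![ρ1, ρ2])
    {v w : Fin 4 → ℂ} (hvw : LinearIndependent ℂ ![v, w])
    (hv : eulerDet ρ1 ρ2 ρ3 = f * linearForm v) (hw : eulerDet ρ1 ρ2 ρ4 = f * linearForm w)
    {a₁ a₂ : S4} (hrel : a₁ • ρ1 + a₂ • ρ2 = linearForm w • ρ3 - linearForm v • ρ4)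
    {b : Fin 4 → S4} (hb : ∑ i, b i • ![ρ1, ρ2, ρ3, ρ4] i = 0) :
    ∃ c : S4, b = c • ![-a₁, -a₂, linearForm w, -linearForm v] := by
  have hb : b 0 • ρ1 + b 1 • ρ2 + b 2 • ρ3 + b 3 • ρ4 = 0 := by
    simpa [Fin.sum_univ_four] using hb
  have hdet := congrArg (eulerDet ρ1 ρ2) hb
  rw [map_add, map_add, eulerDet_smul_add_smul, map_smul, map_smul, hv, hw, smul_eq_mul,
    smul_eq_mul, map_zero] at hdet
  obtain ⟨c, hc₂, hc₃⟩ := exists_eq_mul_of_mul_linearForm_add_eq_zero hvw (b := b 2) (b' := b 3)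
    (mul_left_cancel₀ hf0 (by linear_combination hdet))
  have hcoeff : (b 0 + c * a₁) • ρ1 + (b 1 + c * a₂) • ρ2 = 0 := by
    rw [hc₂, hc₃] at hb
    linear_combination (norm := module) hb + c • hrel
  obtain ⟨hc₀, hc₁⟩ := LinearIndependent.pair_iff.1 hli _ _ hcoeff
  refine ⟨c, ?_⟩
  ext1 i
  fin_cases i
  · exact (eq_neg_of_add_eq_zero_left hc₀).trans (mul_neg c a₁).symm
  · exact (eq_neg_of_add_eq_zero_left hc₁).trans (mul_neg c a₂).symm
  · exact hc₂
  · exact hc₃.trans (mul_neg c _).symm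

lemma isNearlyFreeWith_of_eulerDet_eq_mul_linearForm (h : IsBourbakiPair f ρ1 ρ2 e1 e2)
    (hf0 : f ≠ 0) (hd : e1 + e2 + e3 + 1 = d) (h12 : e1 ≤ e2) (h23 : e2 ≤ e3)
    (h₃ : ρ3 ∈ AR4 f) (h₄ : ρ4 ∈ AR4 f) (hq₃ : VecHomog ρ3 (e3 + 1)) (hq₄ : VecHomog ρ4 (e3 + 1))
    {v w : Fin 4 → ℂ} (hvw : LinearIndependent ℂ ![v, w])
    (hv : eulerDet ρ1 ρ2 ρ3 = f * linearForm v) (hw : eulerDet ρ1 ρ2 ρ4 = f * linearForm w)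
    (hgen : ∀ ρ ∈ AR4 f, ∃ b1 b2 b3 b4 : S4, ρ = b1 • ρ1 + b2 • ρ2 + b3 • ρ3 + b4 • ρ4) :
    IsNearlyFreeWith f d e1 e2 (e3 + 1) := by
  have hw0 : linearForm w ≠ 0 := (map_ne_zero_iff _ linearForm_injective).2 (hvw.ne_zero 1)
  have hmem : linearForm w • ρ3 - linearForm v • ρ4 ∈ AR4 f :=
    sub_mem (Submodule.smul_mem _ _ h₃) (Submodule.smul_mem _ _ h₄)
  have hhom : VecHomog (linearForm w • ρ3 - linearForm v • ρ4) (1 + (e3 + 1)) := fun i =>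
    ((isHomogeneous_linearForm w).mul (hq₃ i)).sub ((isHomogeneous_linearForm v).mul (hq₄ i))
  have hdet : eulerDet ρ1 ρ2 (linearForm w • ρ3 - linearForm v • ρ4) = 0 := by
    rw [map_sub, map_smul, map_smul, hv, hw, smul_eq_mul, smul_eq_mul]
    ring
  obtain ⟨a₁, a₂, ha₁, ha₂, hrel⟩ := h.exists_smul_add_smul_eq_of_eulerDet_eq_zero hmem hhom hdet
    (k₁ := e3 + 1 - e1 + 1) (k₂ := e3 + 1 - e2 + 1) (by omega) (by omega)
  refine ⟨h12, by omega, by omega, ![ρ1, ρ2, ρ3, ρ4], ![-a₁, -a₂, linearForm w, -linearForm v],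
    ?_, h.vecHomog₁, h.vecHomog₂, hq₃, hq₄, fun σ hσ => ?_, ha₁.neg, ha₂.neg,
    isHomogeneous_linearForm w, (isHomogeneous_linearForm v).neg, fun h0 => hw0 (congrFun h0 2),
    ?_, fun b hb => exists_eq_smul_of_sum_smul_eq_zero hf0 h.linearIndependent hvw hv hw hrel hb⟩
  · intro i
    fin_cases i
    exacts [h.mem_AR4_left, h.mem_AR4_right, h₃, h₄]
  · obtain ⟨b1, b2, b3, b4, rfl⟩ := hgen σ hσ
    exact ⟨![b1, b2, b3, b4], by simp [Fin.sum_univ_four]⟩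
  · have hsum : -a₁ • ρ1 + -a₂ • ρ2 + linearForm w • ρ3 + -linearForm v • ρ4 = 0 := by
      linear_combination (norm := module) -hrel
    simpa [Fin.sum_univ_four] using hsum

lemma isNearlyFreeWith_of_hilbertFunction_eq (h : IsBourbakiPair f ρ1 ρ2 e1 e2)
    (hf : f.IsHomogeneous d) (hred : Squarefree f) (hd : e1 + e2 + e3 + 1 = d) (h12 : e1 ≤ e2)
    (h23 : e2 ≤ e3) (hI : bourbakiIdeal f ρ1 ρ2 ≠ ⊤) {c : ℤ} {N : ℕ}
    (hN : ∀ k, N ≤ k → (hilbertFunction (bourbakiIdeal f ρ1 ρ2) k : ℤ) = k + c) {q3 q4 : ℕ}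
    (h₃ : ρ3 ∈ AR4 f) (h₄ : ρ4 ∈ AR4 f) (hq₃ : VecHomog ρ3 q3) (hq₄ : VecHomog ρ4 q4)
    (hgen : ∀ ρ ∈ AR4 f, ∃ b1 b2 b3 b4 : S4, ρ = b1 • ρ1 + b2 • ρ2 + b3 • ρ3 + b4 • ρ4) :
    IsNearlyFreeWith f d e1 e2 (e3 + 1) := by
  have hf0 := hred.ne_zero
  obtain ⟨p3, -, hp3⟩ := h.exists_eulerDet_eq_mul hf hred h₃
  obtain ⟨p4, -, hp4⟩ := h.exists_eulerDet_eq_mul hf hred h₄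
  rw [bourbakiIdeal_eq_span_pair hf0 h₃ h₄ hp3 hp4 hgen] at hN
  obtain ⟨m, hm, hom₃, hm'⟩ :=
    h.exists_one_le_isHomogeneous_of_eulerDet_eq_mul hf hf0 hd hI h₃ hq₃ hp3
  obtain ⟨n, hn, hom₄, hn'⟩ :=
    h.exists_one_le_isHomogeneous_of_eulerDet_eq_mul hf hf0 hd hI h₄ hq₄ hp4
  obtain ⟨rfl, rfl, v, w, rfl, rfl, hvw⟩ :=
    exists_linearForm_of_hilbertFunction_span_pair hN hom₃ hom₄ hm hn
  rw [hm' ((map_ne_zero_iff _ linearForm_injective).2 (hvw.ne_zero 0)), add_comm] at hq₃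
  rw [hn' ((map_ne_zero_iff _ linearForm_injective).2 (hvw.ne_zero 1)), add_comm] at hq₄
  exact h.isNearlyFreeWith_of_eulerDet_eq_mul_linearForm hf0 hd h12 h23 h₃ h₄ hq₃ hq₄ hvw hp3 hp4
    hgen

end IsBourbakiPair

theorem cor_5_3_general {f : S4} {d e1 e2 e3 : ℕ} {ρ1 ρ2 : Fin 4 → S4}
    (hf : f.IsHomogeneous d) (hred : Squarefree f) (h₁ : ρ1 ∈ AR4 f) (h₂ : ρ2 ∈ AR4 f)
    (hρ1 : VecHomog ρ1 e1) (hρ2 : VecHomog ρ2 e2) (hne : ∀ a : S4, ρ2 ≠ a • ρ1)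
    (htame : TamePair f ρ1 ρ2) (hd : e1 + e2 + e3 + 1 = d) (h12 : e1 ≤ e2) (h23 : e2 ≤ e3)
    (hnotfree : ¬ ∃ d1 d2 d3 : ℕ, IsFreeWith f d1 d2 d3) {a b : ℤ}
    (hHilb : ∃ N : ℕ, ∀ k : ℕ, N ≤ k → (milnor4 f k : ℤ) = a * k + b) :
    a ≤ ((e1 : ℤ) + e2 + e3) ^ 2 - ((e1 : ℤ) * e2 + (e1 : ℤ) * e3 + (e2 : ℤ) * e3) - 1 ∧
    (IsNearlyFreeWith f d e1 e2 (e3 + 1) →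
      a = ((e1 : ℤ) + e2 + e3) ^ 2 - ((e1 : ℤ) * e2 + (e1 : ℤ) * e3 + (e2 : ℤ) * e3) - 1) ∧
    ((a = ((e1 : ℤ) + e2 + e3) ^ 2 - ((e1 : ℤ) * e2 + (e1 : ℤ) * e3 + (e2 : ℤ) * e3) - 1 ∧
      ∃ (ρ3 ρ4 : Fin 4 → S4) (q3 q4 : ℕ),
        ρ3 ∈ AR4 f ∧ ρ4 ∈ AR4 f ∧ VecHomog ρ3 q3 ∧ VecHomog ρ4 q4 ∧
        ∀ ρ ∈ AR4 f, ∃ b1 b2 b3 b4 : S4,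
          ρ = b1 • ρ1 + b2 • ρ2 + b3 • ρ3 + b4 • ρ4) →
      IsNearlyFreeWith f d e1 e2 (e3 + 1)) := by
  have h : IsBourbakiPair f ρ1 ρ2 e1 e2 :=
    isBourbakiPair_of_tamePair (by omega) hf hred.ne_zero h₁ h₂ hρ1 hρ2 hne htame
  have hI : bourbakiIdeal f ρ1 ρ2 ≠ ⊤ := fun hI =>
    hnotfree ⟨e1, e2, e3, h.isFreeWith_of_bourbakiIdeal_eq_top hf hred hd h12 h23 hI⟩
  obtain ⟨N, hN⟩ := hHilb
  obtain ⟨c, hc⟩ := h.exists_hilbertFunction_bourbakiIdeal_eq hf hred hd h12 h23 hN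
  refine ⟨?_, fun hnf => ?_, ?_⟩
  · linarith [h.one_le_of_hilbertFunction_eq hI hc]
  · linarith [h.eq_one_of_isNearlyFreeWith hf hred hd hnf hc]
  · rintro ⟨ha, ρ3, ρ4, q3, q4, h₃, h₄, hq₃, hq₄, hgen⟩
    rw [ha, sub_sub_cancel] at hc
    simp only [one_mul] at hc
    exact h.isNearlyFreeWith_of_hilbertFunction_eq hf hred hd h12 h23 hI hc h₃ h₄ hq₃ hq₄ hgen

/-- **Corollary 5.3.** For a tame non-free surface with `e3 ≥ e2` and one-dimensional
singular locus, `deg Σ ≤ s₁² - s₂ - 1`; equality holds if `D` is nearly free with exponents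
`e1, e2, e3 + 1`, and conversely equality together with `AR(f)` being generated by `ρ1, ρ2`
and two further homogeneous syzygies implies near freeness with those exponents. -/
theorem cor_5_3 (f : S4) (d e1 e2 e3 : ℕ) (ρ1 ρ2 : Fin 4 → S4)
    (hd : 1 ≤ d) (hf : f.IsHomogeneous d) (hred : Squarefree f)
    (hmin : MinimalPair f ρ1 ρ2 e1 e2) (htame : TamePair f ρ1 ρ2)
    (he3 : e1 + e2 + e3 + 1 = d) (he23 : e2 ≤ e3)
    (hnotfree : ¬ ∃ d1 d2 d3 : ℕ, IsFreeWith f d1 d2 d3)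
    (a b : ℤ) (hHilb : ∃ N : ℕ, ∀ k : ℕ, N ≤ k → (milnor4 f k : ℤ) = a * k + b) :
    a ≤ ((e1 : ℤ) + e2 + e3) ^ 2 - ((e1 : ℤ) * e2 + (e1 : ℤ) * e3 + (e2 : ℤ) * e3) - 1 ∧
    (IsNearlyFreeWith f d e1 e2 (e3 + 1) →
      a = ((e1 : ℤ) + e2 + e3) ^ 2 - ((e1 : ℤ) * e2 + (e1 : ℤ) * e3 + (e2 : ℤ) * e3) - 1) ∧
    ((a = ((e1 : ℤ) + e2 + e3) ^ 2 - ((e1 : ℤ) * e2 + (e1 : ℤ) * e3 + (e2 : ℤ) * e3) - 1 ∧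
      ∃ (ρ3 ρ4 : Fin 4 → S4) (q3 q4 : ℕ),
        ρ3 ∈ AR4 f ∧ ρ4 ∈ AR4 f ∧ VecHomog ρ3 q3 ∧ VecHomog ρ4 q4 ∧
        ∀ ρ ∈ AR4 f, ∃ b1 b2 b3 b4 : S4,
          ρ = b1 • ρ1 + b2 • ρ2 + b3 • ρ3 + b4 • ρ4) →
      IsNearlyFreeWith f d e1 e2 (e3 + 1)) := by
  obtain ⟨h₁, -, hρ1, -, h₂, hρ2, h12, hne, -⟩ := hmin
  exact cor_5_3_general hf hred h₁ h₂ hρ1 hρ2 hne htame he3 h12 he23 hnotfree hHilb
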